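/- arXiv:1108.1647 — 6 statements merged into one kernel-verified Lean document; each statement's English description precedes it below -/
import Mathlib

section
/- Let P be a real homogeneous polynomial of even degree 2k in n variables and let 0 < σ. Then for every x ∈ ℝⁿ, (2π)^{-n} ∫_{ℝⁿ} e^{-i tᵀx} e^{-σ²|t|²/2} P(t) dt = (-1)^k σ^{-(n+2k)} :P:(x₁/σ, ..., xₙ/σ) (2π)^{-n/2} e^{-|x|²/(2σ²)}. -/
open MeasureTheory Real ProbabilityTheory

noncomputable def hermiteR (m : ℕ) (x : ℝ) : ℝ :=
  Polynomial.aeval x (Polynomial.hermite m)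

noncomputable def renorm {n : ℕ} (P : MvPolynomial (Fin n) ℝ) (x : Fin n → ℝ) : ℝ :=
  ∑ m ∈ P.support, P.coeff m * ∏ i, hermiteR (m i) (x i)

noncomputable def Kconst (n k : ℕ) (σ : ℝ) (P : MvPolynomial (Fin n) ℝ) : ℝ :=
  ⨆ x : Fin n → ℝ, (σ ^ (n + 2*k))⁻¹ * |renorm P x| * Real.exp (-(1 - σ^2) * (∑ i, x i ^ 2) / 2)

noncomputable def fdens (n k : ℕ) (σ ε : ℝ) (P : MvPolynomial (Fin n) ℝ) (x : Fin n → ℝ) : ℝ :=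
  (2*π)^(-(n:ℝ)/2) * Real.exp (-(∑ i, x i ^ 2)/2) *
    (1 + (-1)^k * ε * (σ^(n+2*k))⁻¹ * renorm P (fun i => x i / σ) *
      Real.exp (-(1-σ^2) * (∑ i, x i ^ 2) / (2*σ^2)))

noncomputable def gdens (n k : ℕ) (σ ε : ℝ) (P : MvPolynomial (Fin n) ℝ) (a : Fin n → ℝ) (x : ℝ) : ℝ :=
  (2*π)^(-(1:ℝ)/2) * (Real.exp (-x^2/2) +
    (-1)^k * ε * MvPolynomial.eval a P * (σ^(2*k+1))⁻¹ * hermiteR (2*k) (x/σ) * Real.exp (-x^2/(2*σ^2)))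

/-!
The standard Gaussian is its own Fourier transform up to a constant, so differentiating it `m` times
in the frequency turns the monomial `tᵐ` into `(-i)ᵐ Hₘ`. Fubini extends this to monomials in `n`
variables, where the factors `(-i)^(m i)` multiply to the same `(-i)ᵈ` for all monomials of degree
`d`. The substitution `t ↦ σ t` reduces a general `σ` to `σ = 1`, since `P (σ t) = σᵈ P t`.
-/

lemma iteratedDeriv_ofReal_comp {f : ℝ → ℝ} {m : ℕ} {x : ℝ} (hf : ContDiffAt ℝ m f x) :
    iteratedDeriv m (fun y ↦ (f y : ℂ)) x = iteratedDeriv m f x := by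
  have h := Complex.ofRealCLM.iteratedFDeriv_comp_left hf le_rfl
  simpa [iteratedDeriv, Function.comp_def] using DFunLike.congr_fun h fun _ ↦ 1

lemma iteratedDeriv_neg_of_even {𝕜 F : Type*} [NontriviallyNormedField 𝕜] [NormedAddCommGroup F]
    [NormedSpace 𝕜 F] {f : 𝕜 → F} (hf : f.Even) (m : ℕ) (x : 𝕜) :
    iteratedDeriv m f (-x) = (-1 : 𝕜) ^ m • iteratedDeriv m f x := by
  simpa only [hf _, neg_neg] using iteratedDeriv_comp_neg m f (-x)

lemma charFun_gaussianReal_zero_one :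
    charFun (gaussianReal 0 1) = fun y ↦ ((exp (-(y ^ 2 / 2)) : ℝ) : ℂ) := by
  ext y
  simp [charFun_gaussianReal]

lemma iteratedDeriv_charFun_gaussianReal_zero_one (m : ℕ) (y : ℝ) :
    iteratedDeriv m (charFun (gaussianReal 0 1)) y =
      (-1) ^ m * ((hermiteR m y * exp (-(y ^ 2 / 2)) : ℝ) : ℂ) := by
  rw [charFun_gaussianReal_zero_one, iteratedDeriv_ofReal_comp (by fun_prop),
    iteratedDeriv_eq_iterate, Polynomial.deriv_gaussian_eq_hermite_mul_gaussian, hermiteR]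
  push_cast
  ring

/-- The plane wave of frequency `y`, with the sign convention `e^{-isy}` of the Fourier transform,
times the unnormalized standard Gaussian weight. -/
noncomputable def gaussianWave (y s : ℝ) : ℂ :=
  Complex.exp (-Complex.I * (s * y : ℝ)) * (exp (-(s ^ 2 / 2)) : ℝ)

lemma norm_gaussianWave (y s : ℝ) : ‖gaussianWave y s‖ = exp (-(s ^ 2 / 2)) := by
  rw [gaussianWave, norm_mul, Complex.norm_exp, Complex.norm_real, norm_of_nonneg (exp_pos _).le]
  simp

lemma continuous_gaussianWave (y : ℝ) : Continuous (gaussianWave y) := by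
  unfold gaussianWave
  fun_prop

lemma integrable_pow_mul_gaussianWave (m : ℕ) (y : ℝ) :
    Integrable fun s : ℝ ↦ (s : ℂ) ^ m * gaussianWave y s := by
  have hmoment : Integrable fun s : ℝ ↦ s ^ m * exp (-(s ^ 2 / 2)) := by
    have h := integrable_rpow_mul_exp_neg_mul_sq (b := 1 / 2) (by norm_num)
      (s := m) (neg_one_lt_zero.trans_le m.cast_nonneg)
    simpa [div_eq_inv_mul] using h
  have hcont : Continuous fun s : ℝ ↦ (s : ℂ) ^ m * gaussianWave y s :=
    (Complex.continuous_ofReal.pow m).mul (continuous_gaussianWave y)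
  refine hmoment.mono hcont.aestronglyMeasurable (.of_forall fun s ↦ ?_)
  simp [norm_gaussianWave]

lemma gaussianWave_eq_gaussianPDFReal_smul (y s : ℝ) :
    gaussianWave y s =
      √(2 * π) * (gaussianPDFReal 0 1 s • Complex.exp ((-y : ℝ) * s * Complex.I)) := by
  have hsqrt : √(2 * π) ≠ 0 := by positivity
  have hpdf : exp (-(s ^ 2 / 2)) = √(2 * π) * gaussianPDFReal 0 1 s := by
    simp only [gaussianPDFReal, NNReal.coe_one, mul_one, sub_zero, neg_div,
      mul_inv_cancel_left₀ hsqrt]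
  rw [gaussianWave, hpdf, Complex.real_smul]
  push_cast
  ring_nf

lemma integral_pow_mul_gaussianWave (m : ℕ) (y : ℝ) :
    ∫ s : ℝ, (s : ℂ) ^ m * gaussianWave y s =
      (-Complex.I) ^ m * ((√(2 * π) * (hermiteR m y * exp (-(y ^ 2 / 2))) : ℝ) : ℂ) := by
  have heven : (charFun (gaussianReal 0 1)).Even := fun y ↦ by
    simp only [charFun_gaussianReal_zero_one, neg_sq]
  have hderiv : Complex.I ^ m * ∫ s, (s : ℂ) ^ m * Complex.exp ((-y : ℝ) * s * Complex.I)
      ∂gaussianReal 0 1 = ((hermiteR m y * exp (-(y ^ 2 / 2)) : ℝ) : ℂ) := by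
    rw [← iteratedDeriv_charFun (memLp_id_gaussianReal m), iteratedDeriv_neg_of_even heven,
      iteratedDeriv_charFun_gaussianReal_zero_one, Complex.real_smul]
    push_cast
    rw [← mul_assoc, ← mul_pow, neg_one_mul, neg_neg, one_pow, one_mul]
  have hI_pow : (-Complex.I) ^ m * Complex.I ^ m = 1 := by simp [← mul_pow]
  calc ∫ s : ℝ, (s : ℂ) ^ m * gaussianWave y s
      = √(2 * π) * ∫ s : ℝ, (s : ℂ) ^ m * Complex.exp ((-y : ℝ) * s * Complex.I)
          ∂gaussianReal 0 1 := by
        rw [integral_gaussianReal_eq_integral_smul one_ne_zero, ← integral_const_mul]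
        simp only [gaussianWave_eq_gaussianPDFReal_smul, mul_smul_comm, mul_left_comm]
    _ = (-Complex.I) ^ m * ((√(2 * π) * (hermiteR m y * exp (-(y ^ 2 / 2))) : ℝ) : ℂ) := by
        rw [Complex.ofReal_mul, ← hderiv]
        linear_combination (-(√(2 * π) : ℂ) * ∫ s : ℝ, (s : ℂ) ^ m *
          Complex.exp ((-y : ℝ) * s * Complex.I) ∂gaussianReal 0 1) * hI_pow

section Multivariate

variable {ι : Type*} [Fintype ι]

lemma prod_gaussianWave (y s : ι → ℝ) :
    ∏ i, gaussianWave (y i) (s i) =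
      Complex.exp (-Complex.I * (∑ i, s i * y i : ℝ)) * (exp (-(∑ i, s i ^ 2) / 2) : ℝ) := by
  simp only [gaussianWave, Finset.prod_mul_distrib, ← Complex.exp_sum, ← Finset.mul_sum,
    ← Complex.ofReal_prod, ← Complex.ofReal_sum, ← Real.exp_sum, Finset.sum_neg_distrib,
    ← Finset.sum_div, neg_div]

lemma integrable_prod_pow_mul_gaussianWave (m : ι → ℕ) (y : ι → ℝ) :
    Integrable fun s : ι → ℝ ↦ ∏ i, (s i : ℂ) ^ m i * gaussianWave (y i) (s i) :=
  .fintype_prod fun i ↦ integrable_pow_mul_gaussianWave (m i) (y i)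

lemma integral_prod_pow_mul_gaussianWave (m : ι → ℕ) (y : ι → ℝ) :
    ∫ s : ι → ℝ, ∏ i, (s i : ℂ) ^ m i * gaussianWave (y i) (s i) =
      (-Complex.I) ^ (∑ i, m i) * ((√(2 * π) ^ Fintype.card ι *
        ((∏ i, hermiteR (m i) (y i)) * exp (-(∑ i, y i ^ 2) / 2)) : ℝ) : ℂ) := by
  rw [integral_fintype_prod_volume_eq_prod fun i (s : ℝ) ↦ (s : ℂ) ^ m i * gaussianWave (y i) s]
  simp only [integral_pow_mul_gaussianWave, Finset.prod_mul_distrib, Finset.prod_pow_eq_pow_sum,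
    ← Complex.ofReal_prod, ← Real.exp_sum, Finset.sum_neg_distrib, ← Finset.sum_div, neg_div,
    Finset.prod_const, Finset.card_univ]

end Multivariate

section IsHomogeneous

variable {ι R : Type*} [CommSemiring R] {d : ℕ} {P : MvPolynomial ι R}

lemma degree_eq_of_mem_support_of_isHomogeneous (hP : P.IsHomogeneous d) {m : ι →₀ ℕ}
    (hm : m ∈ P.support) : m.degree = d := by
  rw [Finsupp.degree_eq_weight_one]
  exact hP (MvPolynomial.mem_support_iff.mp hm)

lemma eval_smul_of_isHomogeneous (hP : P.IsHomogeneous d) (c : R) (t : ι → R) :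
    MvPolynomial.eval (c • t) P = c ^ d * MvPolynomial.eval t P := by
  simp only [MvPolynomial.eval_eq, Finset.mul_sum]
  refine Finset.sum_congr rfl fun m hm ↦ ?_
  simp only [Pi.smul_apply, smul_eq_mul, mul_pow, Finset.prod_mul_distrib,
    Finset.prod_pow_eq_pow_sum, ← Finsupp.degree_apply,
    degree_eq_of_mem_support_of_isHomogeneous hP hm]
  ring

end IsHomogeneous

section Renorm

variable {n d : ℕ} {P : MvPolynomial (Fin n) ℝ}

lemma integral_eval_mul_prod_gaussianWave (hP : P.IsHomogeneous d) (y : Fin n → ℝ) :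
    ∫ s : Fin n → ℝ, (MvPolynomial.eval s P : ℂ) * ∏ i, gaussianWave (y i) (s i) =
      (-Complex.I) ^ d * ((√(2 * π) ^ n * (renorm P y * exp (-(∑ i, y i ^ 2) / 2)) : ℝ) : ℂ) := by
  have hexpand (s : Fin n → ℝ) : (MvPolynomial.eval s P : ℂ) * ∏ i, gaussianWave (y i) (s i) =
      ∑ m ∈ P.support, ((P.coeff m : ℝ) : ℂ) * ∏ i, (s i : ℂ) ^ m i * gaussianWave (y i) (s i) := by
    simp only [MvPolynomial.eval_eq', Complex.ofReal_sum, Complex.ofReal_mul, Complex.ofReal_prod,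
      Complex.ofReal_pow, Finset.sum_mul, Finset.prod_mul_distrib, mul_assoc]
  simp only [hexpand]
  rw [integral_finsetSum _ fun (m : Fin n →₀ ℕ) _ ↦
    (integrable_prod_pow_mul_gaussianWave m y).const_mul _]
  simp only [integral_const_mul, integral_prod_pow_mul_gaussianWave, renorm, Finset.sum_mul,
    Finset.mul_sum, Complex.ofReal_sum]
  refine Finset.sum_congr rfl fun m hm ↦ ?_
  rw [← Finsupp.degree_eq_sum, degree_eq_of_mem_support_of_isHomogeneous hP hm, Fintype.card_fin]
  push_cast
  ring

lemma integral_cexp_mul_exp_mul_eval_eq_inv_pow_mul_integral (hP : P.IsHomogeneous d) {σ : ℝ}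
    (hσ : 0 < σ) (x : Fin n → ℝ) :
    ∫ t : Fin n → ℝ, Complex.exp (-Complex.I * ((∑ i, t i * x i : ℝ) : ℂ)) *
        ((exp (-σ ^ 2 * (∑ i, t i ^ 2) / 2) * MvPolynomial.eval t P : ℝ) : ℂ) =
      ((σ ^ (n + d))⁻¹ : ℝ) *
        ∫ s : Fin n → ℝ, (MvPolynomial.eval s P : ℂ) * ∏ i, gaussianWave (x i / σ) (s i) := by
  set G : (Fin n → ℝ) → ℂ := fun s ↦
    (MvPolynomial.eval s P : ℂ) * ∏ i, gaussianWave (x i / σ) (s i) with hG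
  have hσ0 : (σ : ℂ) ≠ 0 := by exact_mod_cast hσ.ne'
  have hphase (t : Fin n → ℝ) : ∑ i, (σ • t) i * (x i / σ) = ∑ i, t i * x i :=
    Finset.sum_congr rfl fun i _ ↦ by rw [Pi.smul_apply, smul_eq_mul]; field_simp
  have hweight (t : Fin n → ℝ) : ∑ i, (σ • t) i ^ 2 = σ ^ 2 * ∑ i, t i ^ 2 := by
    simp only [Pi.smul_apply, smul_eq_mul, mul_pow, Finset.mul_sum]
  have hscale (t : Fin n → ℝ) : Complex.exp (-Complex.I * ((∑ i, t i * x i : ℝ) : ℂ)) *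
      ((exp (-σ ^ 2 * (∑ i, t i ^ 2) / 2) * MvPolynomial.eval t P : ℝ) : ℂ) =
      ((σ ^ d)⁻¹ : ℝ) * G (σ • t) := by
    simp only [hG, prod_gaussianWave (fun i ↦ x i / σ) (σ • t), hphase, hweight,
      eval_smul_of_isHomogeneous hP, ← neg_mul]
    push_cast
    field_simp
  simp only [hscale]
  rw [integral_const_mul, Measure.integral_comp_smul_of_nonneg _ _ _ (hR := hσ.le),
    Module.finrank_fin_fun, Complex.real_smul, ← mul_assoc, ← Complex.ofReal_mul, ← mul_inv,
    ← pow_add, add_comm d n]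

end Renorm

lemma rpow_neg_mul_sqrt_pow {a : ℝ} (ha : 0 < a) (n : ℕ) :
    a ^ (-(n : ℝ)) * √a ^ n = a ^ (-(n : ℝ) / 2) := by
  rw [sqrt_eq_rpow, ← rpow_mul_natCast ha.le, ← rpow_add ha]
  ring_nf

theorem stmt_1_general (n d : ℕ) (P : MvPolynomial (Fin n) ℝ) (hP : P.IsHomogeneous d)
    (σ : ℝ) (hσ : 0 < σ) (x : Fin n → ℝ) :
    ((2 * π) ^ (-(n : ℝ)) : ℝ) *
      ∫ t : Fin n → ℝ, Complex.exp (-Complex.I * ((∑ i, t i * x i : ℝ) : ℂ)) *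
        ((exp (-σ ^ 2 * (∑ i, t i ^ 2) / 2) * MvPolynomial.eval t P : ℝ) : ℂ) =
      (-Complex.I) ^ d * (((σ ^ (n + d))⁻¹ * renorm P (fun i ↦ x i / σ) *
        (2 * π) ^ (-(n : ℝ) / 2) * exp (-(∑ i, x i ^ 2) / (2 * σ ^ 2)) : ℝ) : ℂ) := by
  have hexponent : -(∑ i, (x i / σ) ^ 2) / 2 = -(∑ i, x i ^ 2) / (2 * σ ^ 2) := by
    simp only [div_pow, ← Finset.sum_div]
    ring
  rw [integral_cexp_mul_exp_mul_eval_eq_inv_pow_mul_integral hP hσ,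
    integral_eval_mul_prod_gaussianWave hP, hexponent, ← rpow_neg_mul_sqrt_pow two_pi_pos]
  push_cast
  ring

/-- For a real homogeneous polynomial P of even degree 2k and σ > 0,
(2π)^{-n} ∫ e^{-i tᵀx} e^{-σ²|t|²/2} P(t) dt
  = (-1)^k σ^{-(n+2k)} :P:(x/σ) (2π)^{-n/2} e^{-|x|²/(2σ²)}. -/
theorem stmt_1 (n k : ℕ) (P : MvPolynomial (Fin n) ℝ) (hP : P.IsHomogeneous (2 * k))
    (σ : ℝ) (hσ : 0 < σ) (x : Fin n → ℝ) :
    ((2*π)^(-(n:ℝ)) : ℝ) *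
      ∫ t : Fin n → ℝ, Complex.exp (-Complex.I * ((∑ i, t i * x i : ℝ) : ℂ)) *
        ((Real.exp (-σ^2 * (∑ i, t i ^ 2) / 2) * MvPolynomial.eval t P : ℝ) : ℂ)
    = (((-1)^k * (σ^(n+2*k))⁻¹ * renorm P (fun i => x i / σ) *
        (2*π)^(-(n:ℝ)/2) * Real.exp (-(∑ i, x i ^ 2) / (2*σ^2)) : ℝ) : ℂ) := by
  rw [stmt_1_general n (2 * k) P hP σ hσ x, pow_mul, neg_sq, Complex.I_sq]
  push_cast
  ring
end

section
/- Let 0 < σ < 1, let P be a real homogeneous polynomial of even degree 2k in n variables with P ≠ 0, let |ε| ≤ K(σ,P)⁻¹, and let μ be the probability measure on ℝⁿ with density f(·;ε,σ,P). Then for any unit vector a ∈ ℝⁿ, the pushforward of μ under the linear functional x ↦ aᵀx has characteristic function φ_a(t) = e^{-t²/2} + ε P(a) t^{2k} e^{-σ²t²/2} for t ∈ ℝ. -/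
open MeasureTheory Real ProbabilityTheory

/-!
Put `G_P(x) = :P:(x) e^{-|x|²/2}`. In one variable `(H_m(x) e^{-x²/2})' = -H_{m+1}(x) e^{-x²/2}`, so
integrating by parts `m` times shows that `H_m(x) e^{-x²/2}` has Fourier transform
`√(2π) (is)^m e^{-s²/2}`. Multiplying over the coordinates and summing over the monomials of `P`, the
Fourier transform of `G_P` is `(2π)^{n/2} P(is) e^{-|s|²/2}`. Since
`f(x;ε,σ,P) = (2π)^{-n/2} (G_1(x) + (-1)^k ε σ^{-(n+2k)} G_P(x/σ))`, rescaling by `σ` and using the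
homogeneity `P(iσs) = (-1)^k σ^{2k} P(s)` gives the characteristic function of `μ` on `ℝⁿ`; restricting
it to the line `ℝ a` gives that of the projection.
-/

section HomogeneousPolynomial

lemma aeval_const_mul_of_isHomogeneous {ι R S : Type*} [CommSemiring R] [CommSemiring S]
    [Algebra R S] {P : MvPolynomial ι R} {d : ℕ} (hP : P.IsHomogeneous d) (c : S) (x : ι → S) :
    MvPolynomial.aeval (fun i => c * x i) P = c ^ d * MvPolynomial.aeval x P := by
  simp only [MvPolynomial.aeval_def, MvPolynomial.eval₂_eq, Finset.mul_sum]
  refine Finset.sum_congr rfl fun m hm => ?_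
  rw [hP.degree_eq_sum_deg_support hm, ← Finset.prod_pow_eq_pow_sum, mul_left_comm,
    ← Finset.prod_mul_distrib]
  simp only [mul_pow]

lemma eval_const_mul_of_isHomogeneous {ι R : Type*} [CommSemiring R] {P : MvPolynomial ι R}
    {d : ℕ} (hP : P.IsHomogeneous d) (c : R) (x : ι → R) :
    MvPolynomial.eval (fun i => c * x i) P = c ^ d * MvPolynomial.eval x P := by
  simpa only [MvPolynomial.aeval_eq_eval] using aeval_const_mul_of_isHomogeneous hP c x

end HomogeneousPolynomial

section PolynomialTimesGaussian

variable {R : Type*} [CommSemiring R] [Algebra R ℝ]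

lemma integrable_aeval_mul_exp_neg_mul_sq (p : Polynomial R) {c : ℝ} (hc : 0 < c) :
    Integrable fun x : ℝ => Polynomial.aeval x p * Real.exp (-c * x ^ 2) := by
  induction p using Polynomial.induction_on' with
  | add p q hp hq => simpa only [map_add, add_mul] using! hp.add hq
  | monomial j r =>
    have hj : (-1 : ℝ) < j := by linarith [j.cast_nonneg (α := ℝ)]
    simpa only [Polynomial.aeval_monomial, Real.rpow_natCast, mul_assoc] using
      (integrable_rpow_mul_exp_neg_mul_sq hc hj).const_mul (algebraMap R ℝ r)

lemma tendsto_aeval_mul_exp_neg_mul_sq_cocompact (p : Polynomial R) {c : ℝ} (hc : 0 < c) :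
    Filter.Tendsto (fun x : ℝ => Polynomial.aeval x p * Real.exp (-c * x ^ 2))
      (Filter.cocompact ℝ) (nhds 0) := by
  induction p using Polynomial.induction_on' with
  | add p q hp hq => simpa only [map_add, add_mul, add_zero] using hp.add hq
  | monomial j r =>
    have habs : Filter.Tendsto (fun x : ℝ => |x ^ j * Real.exp (-c * x ^ 2)|)
        (Filter.cocompact ℝ) (nhds 0) := by
      simpa only [abs_mul, abs_pow, Real.abs_exp, Real.rpow_natCast] using
        tendsto_rpow_abs_mul_exp_neg_mul_sq_cocompact hc j
    simpa only [Polynomial.aeval_monomial, mul_assoc, mul_zero] using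
      ((tendsto_zero_iff_abs_tendsto_zero _).2 habs).const_mul (algebraMap R ℝ r)

lemma exists_abs_aeval_mul_exp_neg_mul_sq_le (p : Polynomial R) {c : ℝ} (hc : 0 < c) :
    ∃ C, ∀ x : ℝ, |Polynomial.aeval x p| * Real.exp (-c * x ^ 2) ≤ C := by
  have hcont : Continuous fun x : ℝ => Polynomial.aeval x p * Real.exp (-c * x ^ 2) := by fun_prop
  obtain ⟨C, hC⟩ := ((tendsto_aeval_mul_exp_neg_mul_sq_cocompact p
    hc).isCompact_insert_range_of_cocompact hcont).isBounded.exists_norm_le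
  refine ⟨C, fun x => ?_⟩
  simpa only [Real.norm_eq_abs, abs_mul, Real.abs_exp] using
    hC _ (Set.mem_insert_of_mem _ (Set.mem_range_self x))

end PolynomialTimesGaussian

section HermiteGaussian

lemma continuous_hermiteR (m : ℕ) : Continuous (hermiteR m) :=
  Polynomial.continuous_aeval _

/-- The (unnormalized) Hermite function `H_m(x) e^{-x²/2}`, which is `(-1)^m` times the `m`-th
derivative of the Gaussian `e^{-x²/2}`. -/
noncomputable def hermiteGaussian (m : ℕ) (x : ℝ) : ℝ :=
  hermiteR m x * Real.exp (-x ^ 2 / 2)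

lemma hasDerivAt_hermiteGaussian (m : ℕ) (x : ℝ) :
    HasDerivAt (hermiteGaussian m) (-hermiteGaussian (m + 1) x) x := by
  have hpoly : HasDerivAt (hermiteR m)
      (Polynomial.aeval x (Polynomial.derivative (Polynomial.hermite m))) x :=
    Polynomial.hasDerivAt_aeval _ x
  have hexp : HasDerivAt (fun y : ℝ => Real.exp (-y ^ 2 / 2)) (Real.exp (-x ^ 2 / 2) * -x) x := by
    refine ((hasDerivAt_pow 2 x).fun_neg.div_const 2).exp.congr_deriv ?_
    ring_nf
  have hsucc : hermiteR (m + 1) x = x * hermiteR m x -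
      Polynomial.aeval x (Polynomial.derivative (Polynomial.hermite m)) := by
    simp [hermiteR, Polynomial.hermite_succ]
  refine (hpoly.mul hexp).congr_deriv ?_
  rw [hermiteGaussian, hsucc]
  ring

lemma integrable_hermiteGaussian (m : ℕ) : Integrable (hermiteGaussian m) := by
  refine (integrable_aeval_mul_exp_neg_mul_sq (Polynomial.hermite m) one_half_pos).congr
    (.of_forall fun x => ?_)
  simp only [hermiteGaussian, hermiteR]
  ring_nf

lemma integrable_hermiteGaussian_mul_cexp (m : ℕ) (s : ℝ) :
    Integrable fun x : ℝ => (hermiteGaussian m x : ℂ) * Complex.exp (Complex.I * (s * x : ℝ)) :=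
  (integrable_hermiteGaussian m).ofReal.mul_bdd (c := 1) (by fun_prop)
    (.of_forall fun x => (Complex.norm_exp_I_mul_ofReal _).le)

lemma integral_hermiteGaussian_zero_mul_cexp (s : ℝ) :
    ∫ x : ℝ, (hermiteGaussian 0 x : ℂ) * Complex.exp (Complex.I * (s * x : ℝ)) =
      (√(2 * π) * Real.exp (-s ^ 2 / 2) : ℝ) := by
  have hsqrt : (π / (1 / 2 : ℂ)) ^ (1 / 2 : ℂ) = (√(2 * π) : ℝ) := by
    rw [Real.sqrt_eq_rpow, Complex.ofReal_cpow (by positivity)]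
    push_cast
    ring_nf
  calc ∫ x : ℝ, (hermiteGaussian 0 x : ℂ) * Complex.exp (Complex.I * (s * x : ℝ))
      = ∫ x : ℝ, Complex.exp (Complex.I * s * x) * Complex.exp (-(1 / 2) * (x : ℂ) ^ 2) := by
        refine integral_congr_ae (.of_forall fun x => ?_)
        simp only [hermiteGaussian, hermiteR, Polynomial.hermite_zero, map_one]
        push_cast
        ring_nf
    _ = (√(2 * π) * Real.exp (-s ^ 2 / 2) : ℝ) := by
        rw [fourierIntegral_gaussian (by norm_num), hsqrt]
        push_cast
        ring_nf

lemma integral_hermiteGaussian_succ_mul_cexp (m : ℕ) (s : ℝ) :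
    ∫ x : ℝ, (hermiteGaussian (m + 1) x : ℂ) * Complex.exp (Complex.I * (s * x : ℝ)) =
      Complex.I * s *
        ∫ x : ℝ, (hermiteGaussian m x : ℂ) * Complex.exp (Complex.I * (s * x : ℝ)) := by
  have hcexp (x : ℝ) : HasDerivAt (fun y : ℝ => Complex.exp (Complex.I * (s * y : ℝ)))
      (Complex.exp (Complex.I * (s * x : ℝ)) * (Complex.I * s)) x := by
    simpa [mul_assoc] using
      ((hasDerivAt_id (x : ℂ)).const_mul (Complex.I * s)).cexp.comp_ofReal
  have hint := integrable_hermiteGaussian_mul_cexp m s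
  have hparts := integral_mul_deriv_eq_deriv_mul_of_integrable
    (fun x _ => (hasDerivAt_hermiteGaussian m x).ofReal_comp) (fun x _ => hcexp x)
    (by simpa only [mul_assoc] using! hint.mul_const (Complex.I * s))
    (by simpa only [Pi.mul_def, Complex.ofReal_neg, neg_mul] using
      (integrable_hermiteGaussian_mul_cexp (m + 1) s).fun_neg) hint
  simp only [Complex.ofReal_neg, neg_mul, integral_neg, neg_neg, ← mul_assoc] at hparts
  rw [← hparts, mul_comm, ← integral_mul_const]
  simp only [mul_assoc]

lemma integral_hermiteGaussian_mul_cexp (m : ℕ) (s : ℝ) :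
    ∫ x : ℝ, (hermiteGaussian m x : ℂ) * Complex.exp (Complex.I * (s * x : ℝ)) =
      (Complex.I * s) ^ m * (√(2 * π) * Real.exp (-s ^ 2 / 2) : ℝ) := by
  induction m with
  | zero => rw [integral_hermiteGaussian_zero_mul_cexp, pow_zero, one_mul]
  | succ m ih => rw [integral_hermiteGaussian_succ_mul_cexp, ih, pow_succ' (Complex.I * s),
    mul_assoc (Complex.I * s)]

end HermiteGaussian

lemma smul_dotProduct_inv_smul {ι K : Type*} [Fintype ι] [Semifield K] {c : K} (hc : c ≠ 0)
    (v w : ι → K) : (c • v) ⬝ᵥ (c⁻¹ • w) = v ⬝ᵥ w := by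
  rw [smul_dotProduct, dotProduct_smul, smul_smul, mul_inv_cancel₀ hc, one_smul]

section RenormGaussian

variable {n : ℕ} (P : MvPolynomial (Fin n) ℝ)

lemma continuous_renorm : Continuous (renorm P) := by
  unfold renorm
  have := continuous_hermiteR
  fun_prop

lemma bddAbove_range_abs_renorm_mul_exp {c : ℝ} (hc : 0 < c) :
    BddAbove (Set.range fun x : Fin n → ℝ => |renorm P x| * Real.exp (-c * ∑ i, x i ^ 2)) := by
  choose C hC using fun m => exists_abs_aeval_mul_exp_neg_mul_sq_le (Polynomial.hermite m) hc
  refine ⟨∑ m ∈ P.support, |P.coeff m| * ∏ i, C (m i), Set.forall_mem_range.2 fun x => ?_⟩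
  calc |renorm P x| * Real.exp (-c * ∑ i, x i ^ 2)
      ≤ (∑ m ∈ P.support, |P.coeff m * ∏ i, hermiteR (m i) (x i)|) *
          Real.exp (-c * ∑ i, x i ^ 2) := by
        gcongr
        exact Finset.abs_sum_le_sum_abs _ _
    _ = ∑ m ∈ P.support, |P.coeff m| *
          ∏ i, |hermiteR (m i) (x i)| * Real.exp (-c * x i ^ 2) := by
        simp only [Finset.sum_mul, abs_mul, Finset.abs_prod, Finset.mul_sum, Real.exp_sum,
          Finset.prod_mul_distrib, mul_assoc]
    _ ≤ ∑ m ∈ P.support, |P.coeff m| * ∏ i, C (m i) := by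
        gcongr with m _ i _
        exact hC (m i) (x i)

/-- The function `:P:(x) e^{-|x|²/2}` on `ℝⁿ`, the multivariate analogue of `hermiteGaussian`. -/
noncomputable def renormGaussian (x : Fin n → ℝ) : ℝ :=
  renorm P x * Real.exp (-(∑ i, x i ^ 2) / 2)

lemma renormGaussian_eq_sum (x : Fin n → ℝ) :
    renormGaussian P x = ∑ m ∈ P.support, P.coeff m * ∏ i, hermiteGaussian (m i) (x i) := by
  simp only [renormGaussian, renorm, hermiteGaussian, Finset.sum_mul, Finset.prod_mul_distrib,
    ← Real.exp_sum, ← Finset.sum_div, Finset.sum_neg_distrib, mul_assoc]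

lemma renormGaussian_mul_cexp_eq_sum (s x : Fin n → ℝ) :
    (renormGaussian P x : ℂ) * Complex.exp (Complex.I * (s ⬝ᵥ x : ℝ)) =
      ∑ m ∈ P.support, ((P.coeff m : ℝ) : ℂ) *
        ∏ i, (hermiteGaussian (m i) (x i) : ℂ) * Complex.exp (Complex.I * (s i * x i : ℝ)) := by
  simp only [renormGaussian_eq_sum, dotProduct, Complex.ofReal_sum, Complex.ofReal_mul,
    Complex.ofReal_prod, Finset.mul_sum, Complex.exp_sum, Finset.sum_mul, Finset.prod_mul_distrib,
    mul_assoc]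

lemma integrable_prod_hermiteGaussian_mul_cexp {ι : Type*} [Fintype ι] (m : ι → ℕ) (s : ι → ℝ) :
    Integrable fun x : ι → ℝ =>
      ∏ i, (hermiteGaussian (m i) (x i) : ℂ) * Complex.exp (Complex.I * (s i * x i : ℝ)) :=
  Integrable.fintype_prod fun i => integrable_hermiteGaussian_mul_cexp (m i) (s i)

lemma integrable_renormGaussian_mul_cexp (s : Fin n → ℝ) :
    Integrable fun x => (renormGaussian P x : ℂ) * Complex.exp (Complex.I * (s ⬝ᵥ x : ℝ)) := by
  simp only [renormGaussian_mul_cexp_eq_sum]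
  exact integrable_finsetSum _ fun m _ =>
    (integrable_prod_hermiteGaussian_mul_cexp m s).const_mul _

lemma integral_prod_hermiteGaussian_mul_cexp {ι : Type*} [Fintype ι] (m : ι → ℕ) (s : ι → ℝ) :
    ∫ x : ι → ℝ, ∏ i,
        (hermiteGaussian (m i) (x i) : ℂ) * Complex.exp (Complex.I * (s i * x i : ℝ)) =
      (∏ i, (Complex.I * s i) ^ m i) *
        (√(2 * π) ^ Fintype.card ι * Real.exp (-(∑ i, s i ^ 2) / 2) : ℝ) := by
  rw [integral_fintype_prod_volume_eq_prod fun i (y : ℝ) =>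
    (hermiteGaussian (m i) y : ℂ) * Complex.exp (Complex.I * (s i * y : ℝ))]
  simp only [integral_hermiteGaussian_mul_cexp, Finset.prod_mul_distrib, ← Complex.ofReal_prod,
    ← Real.exp_sum, ← Finset.sum_div, Finset.sum_neg_distrib, Finset.prod_const, Finset.card_univ]

lemma integral_renormGaussian_mul_cexp (s : Fin n → ℝ) :
    ∫ x, (renormGaussian P x : ℂ) * Complex.exp (Complex.I * (s ⬝ᵥ x : ℝ)) =
      MvPolynomial.aeval (fun i => Complex.I * (s i : ℂ)) P *
        (√(2 * π) ^ n * Real.exp (-(∑ i, s i ^ 2) / 2) : ℝ) := by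
  simp only [renormGaussian_mul_cexp_eq_sum]
  rw [integral_finsetSum _ fun (m : Fin n →₀ ℕ) _ =>
    (integrable_prod_hermiteGaussian_mul_cexp m s).const_mul _]
  simp only [integral_const_mul, integral_prod_hermiteGaussian_mul_cexp, Fintype.card_fin,
    MvPolynomial.aeval_def, MvPolynomial.eval₂_eq', Finset.sum_mul, mul_assoc]
  rfl

variable {P} in
lemma integral_renormGaussian_mul_cexp_of_isHomogeneous {d : ℕ} (hP : P.IsHomogeneous d)
    (s : Fin n → ℝ) :
    ∫ x, (renormGaussian P x : ℂ) * Complex.exp (Complex.I * (s ⬝ᵥ x : ℝ)) =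
      Complex.I ^ d *
        (MvPolynomial.eval s P * (√(2 * π) ^ n * Real.exp (-(∑ i, s i ^ 2) / 2)) : ℝ) := by
  have heval : MvPolynomial.aeval (fun i => (s i : ℂ)) P = (MvPolynomial.eval s P : ℂ) := by
    simpa only [MvPolynomial.aeval_eq_eval] using!
      MvPolynomial.aeval_algebraMap_apply ℂ s P
  rw [integral_renormGaussian_mul_cexp, aeval_const_mul_of_isHomogeneous hP, heval,
    Complex.ofReal_mul (MvPolynomial.eval s P), mul_assoc]

variable {σ : ℝ}

lemma integrable_renormGaussian_inv_smul_mul_cexp (hσ : σ ≠ 0) (s : Fin n → ℝ) :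
    Integrable fun x =>
      (renormGaussian P (σ⁻¹ • x) : ℂ) * Complex.exp (Complex.I * (s ⬝ᵥ x : ℝ)) := by
  simpa only [smul_dotProduct_inv_smul hσ] using
    (integrable_renormGaussian_mul_cexp P (σ • s)).comp_smul (inv_ne_zero hσ)

lemma integral_renormGaussian_inv_smul_mul_cexp (hσ : 0 < σ) (s : Fin n → ℝ) :
    ∫ x, (renormGaussian P (σ⁻¹ • x) : ℂ) * Complex.exp (Complex.I * (s ⬝ᵥ x : ℝ)) =
      σ ^ n * ∫ x, (renormGaussian P x : ℂ) * Complex.exp (Complex.I * ((σ • s) ⬝ᵥ x : ℝ)) := by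
  have hscale := Measure.integral_comp_inv_smul volume
    (fun x => (renormGaussian P x : ℂ) * Complex.exp (Complex.I * ((σ • s) ⬝ᵥ x : ℝ))) σ
  simpa only [smul_dotProduct_inv_smul hσ.ne', Module.finrank_fin_fun, abs_of_pos (pow_pos hσ n),
    Complex.real_smul, Complex.ofReal_pow] using hscale

variable {P} in
lemma integral_renormGaussian_inv_smul_mul_cexp_of_isHomogeneous {d : ℕ}
    (hP : P.IsHomogeneous d) (hσ : 0 < σ) (s : Fin n → ℝ) :
    ∫ x, (renormGaussian P (σ⁻¹ • x) : ℂ) * Complex.exp (Complex.I * (s ⬝ᵥ x : ℝ)) =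
      Complex.I ^ d * (σ ^ (n + d) * MvPolynomial.eval s P *
        (√(2 * π) ^ n * Real.exp (-σ ^ 2 * (∑ i, s i ^ 2) / 2)) : ℝ) := by
  have heval : MvPolynomial.eval (σ • s) P = σ ^ d * MvPolynomial.eval s P :=
    eval_const_mul_of_isHomogeneous hP σ s
  have hnorm : -∑ i, (σ • s) i ^ 2 = -σ ^ 2 * ∑ i, s i ^ 2 := by
    simp only [Pi.smul_apply, smul_eq_mul, mul_pow, ← Finset.mul_sum, neg_mul]
  rw [integral_renormGaussian_inv_smul_mul_cexp P hσ,
    integral_renormGaussian_mul_cexp_of_isHomogeneous hP, heval, hnorm]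
  push_cast
  ring

end RenormGaussian

section Density

variable {n k : ℕ} {σ ε : ℝ} {P : MvPolynomial (Fin n) ℝ}

lemma continuous_fdens : Continuous (fdens n k σ ε P) := by
  unfold fdens
  have := continuous_renorm P
  fun_prop

lemma le_Kconst (hσ0 : 0 < σ) (hσ1 : σ < 1) (x : Fin n → ℝ) :
    (σ ^ (n + 2 * k))⁻¹ * |renorm P x| * Real.exp (-(1 - σ ^ 2) * (∑ i, x i ^ 2) / 2) ≤
      Kconst n k σ P := by
  refine le_ciSup (f := fun x : Fin n → ℝ => (σ ^ (n + 2 * k))⁻¹ * |renorm P x| *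
    Real.exp (-(1 - σ ^ 2) * (∑ i, x i ^ 2) / 2)) ?_ x
  obtain ⟨C, hC⟩ := bddAbove_range_abs_renorm_mul_exp P (c := (1 - σ ^ 2) / 2) (by nlinarith)
  refine ⟨(σ ^ (n + 2 * k))⁻¹ * C, Set.forall_mem_range.2 fun y => ?_⟩
  rw [mul_assoc, mul_div_right_comm, neg_div]
  gcongr
  exact hC (Set.mem_range_self y)

lemma fdens_nonneg (hσ0 : 0 < σ) (hσ1 : σ < 1) (hε : |ε| ≤ (Kconst n k σ P)⁻¹) (x : Fin n → ℝ) :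
    0 ≤ fdens n k σ ε P x := by
  set y : Fin n → ℝ := fun i => x i / σ with hy
  have hexp : -(1 - σ ^ 2) * (∑ i, y i ^ 2) / 2 = -(1 - σ ^ 2) * (∑ i, x i ^ 2) / (2 * σ ^ 2) := by
    simp only [hy, div_pow, ← Finset.sum_div]
    field_simp
  have hK := hexp ▸ le_Kconst (k := k) (P := P) hσ0 hσ1 y
  have hK0 : 0 ≤ Kconst n k σ P := le_trans (by positivity) hK
  have hpert : |(-1) ^ k * ε * (σ ^ (n + 2 * k))⁻¹ * renorm P y *
      Real.exp (-(1 - σ ^ 2) * (∑ i, x i ^ 2) / (2 * σ ^ 2))| ≤ 1 :=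
    calc _ = |ε| * ((σ ^ (n + 2 * k))⁻¹ * |renorm P y| *
          Real.exp (-(1 - σ ^ 2) * (∑ i, x i ^ 2) / (2 * σ ^ 2))) := by
          simp only [abs_mul, abs_pow, abs_neg, abs_one, one_pow, one_mul, Real.abs_exp, abs_inv,
            abs_of_pos hσ0, mul_assoc]
      _ ≤ (Kconst n k σ P)⁻¹ * Kconst n k σ P := by gcongr
      _ ≤ 1 := inv_mul_le_one
  exact mul_nonneg (by positivity) (by linarith [(abs_le.1 hpert).1])

lemma fdens_eq_renormGaussian (hσ : σ ≠ 0) (x : Fin n → ℝ) :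
    fdens n k σ ε P x = (2 * π) ^ (-(n : ℝ) / 2) * (renormGaussian 1 x +
      (-1) ^ k * ε * (σ ^ (n + 2 * k))⁻¹ * renormGaussian P (σ⁻¹ • x)) := by
  have hone : renorm (1 : MvPolynomial (Fin n) ℝ) x = 1 := by
    simp [renorm, hermiteR, MvPolynomial.support_one]
  have hexp : Real.exp (-(∑ i, (σ⁻¹ • x) i ^ 2) / 2) = Real.exp (-(∑ i, x i ^ 2) / 2) *
      Real.exp (-(1 - σ ^ 2) * (∑ i, x i ^ 2) / (2 * σ ^ 2)) := by
    simp only [Pi.smul_apply, smul_eq_mul, mul_pow, ← Finset.mul_sum, ← Real.exp_add]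
    congr 1
    field_simp
    ring
  have hdiv : (fun i => x i / σ) = σ⁻¹ • x := by
    ext i
    simp [div_eq_inv_mul]
  rw [fdens, renormGaussian, renormGaussian, hone, hexp, hdiv]
  ring

lemma two_pi_rpow_neg_div_two_mul_sqrt_pow (n : ℕ) :
    (2 * π) ^ (-(n : ℝ) / 2) * √(2 * π) ^ n = 1 := by
  have hpos : 0 < 2 * π := by positivity
  rw [Real.sqrt_eq_rpow, ← Real.rpow_mul_natCast hpos.le, ← Real.rpow_add hpos,
    show -(n : ℝ) / 2 + 1 / 2 * n = 0 by ring, Real.rpow_zero]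

lemma integral_fdens_mul_cexp (hσ : 0 < σ) (hP : P.IsHomogeneous (2 * k)) (s : Fin n → ℝ) :
    ∫ x, (fdens n k σ ε P x : ℂ) * Complex.exp (Complex.I * (s ⬝ᵥ x : ℝ)) =
      (Real.exp (-(∑ i, s i ^ 2) / 2) +
        ε * MvPolynomial.eval s P * Real.exp (-σ ^ 2 * (∑ i, s i ^ 2) / 2) : ℝ) := by
  have hsplit (x : Fin n → ℝ) :
      (fdens n k σ ε P x : ℂ) * Complex.exp (Complex.I * (s ⬝ᵥ x : ℝ)) =
        ((2 * π) ^ (-(n : ℝ) / 2) : ℝ) *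
          (renormGaussian 1 x * Complex.exp (Complex.I * (s ⬝ᵥ x : ℝ)) +
            ((-1) ^ k * ε * (σ ^ (n + 2 * k))⁻¹ : ℝ) *
              (renormGaussian P (σ⁻¹ • x) * Complex.exp (Complex.I * (s ⬝ᵥ x : ℝ)))) := by
    rw [fdens_eq_renormGaussian hσ.ne']
    push_cast
    ring
  have hI : Complex.I ^ (2 * k) = ((-1) ^ k : ℝ) := by simp [pow_mul]
  have hsign : ((-1) ^ k * (-1) ^ k : ℝ) = 1 := by simp [← mul_pow]
  simp only [hsplit]
  rw [integral_const_mul, integral_add (integrable_renormGaussian_mul_cexp 1 s)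
      ((integrable_renormGaussian_inv_smul_mul_cexp P hσ.ne' s).const_mul _),
    integral_const_mul, integral_renormGaussian_inv_smul_mul_cexp_of_isHomogeneous hP hσ,
    integral_renormGaussian_mul_cexp_of_isHomogeneous (MvPolynomial.isHomogeneous_one _ _), hI,
    map_one, pow_zero, one_mul, one_mul]
  simp only [← Complex.ofReal_mul, ← Complex.ofReal_add, Complex.ofReal_inj]
  calc _ = ((2 * π) ^ (-(n : ℝ) / 2) * √(2 * π) ^ n) * (Real.exp (-(∑ i, s i ^ 2) / 2) +
        ((-1) ^ k * (-1) ^ k) * ((σ ^ (n + 2 * k))⁻¹ * σ ^ (n + 2 * k)) *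
          (ε * MvPolynomial.eval s P * Real.exp (-σ ^ 2 * (∑ i, s i ^ 2) / 2))) := by ring
    _ = _ := by
      rw [two_pi_rpow_neg_div_two_mul_sqrt_pow, hsign, inv_mul_cancel₀ (pow_pos hσ _).ne']
      ring

lemma integral_cexp_withDensity_fdens (hσ0 : 0 < σ) (hσ1 : σ < 1) (hP : P.IsHomogeneous (2 * k))
    (hε : |ε| ≤ (Kconst n k σ P)⁻¹) (s : Fin n → ℝ) :
    ∫ x, Complex.exp (Complex.I * (s ⬝ᵥ x : ℝ))
        ∂(volume.withDensity fun x => ENNReal.ofReal (fdens n k σ ε P x)) =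
      (Real.exp (-(∑ i, s i ^ 2) / 2) +
        ε * MvPolynomial.eval s P * Real.exp (-σ ^ 2 * (∑ i, s i ^ 2) / 2) : ℝ) := by
  rw [integral_withDensity_eq_integral_toReal_smul continuous_fdens.measurable.ennreal_ofReal
    (.of_forall fun _ => ENNReal.ofReal_lt_top)]
  simp only [ENNReal.toReal_ofReal (fdens_nonneg hσ0 hσ1 hε _), Complex.real_smul]
  exact integral_fdens_mul_cexp hσ0 hP s

end Density

theorem stmt_4_general (n k : ℕ) (σ : ℝ) (hσ0 : 0 < σ) (hσ1 : σ < 1)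
    (P : MvPolynomial (Fin n) ℝ) (hP : P.IsHomogeneous (2 * k))
    (ε : ℝ) (hε : |ε| ≤ (Kconst n k σ P)⁻¹)
    (μ : Measure (Fin n → ℝ))
    (hμ : μ = volume.withDensity (fun x => ENNReal.ofReal (fdens n k σ ε P x)))
    (a : Fin n → ℝ) (t : ℝ) :
    ∫ y : ℝ, Complex.exp (Complex.I * (t : ℂ) * (y : ℂ))
        ∂(Measure.map (fun x => ∑ i, a i * x i) μ) =
      (Real.exp (-t ^ 2 * (∑ i, a i ^ 2) / 2) + ε * MvPolynomial.eval a P * t ^ (2 * k) *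
        Real.exp (-σ ^ 2 * t ^ 2 * (∑ i, a i ^ 2) / 2) : ℝ) := by
  have hmeas : Measurable fun x : Fin n → ℝ => ∑ i, a i * x i := by fun_prop
  have hdot (x : Fin n → ℝ) :
      Complex.I * (t : ℂ) * ((∑ i, a i * x i : ℝ) : ℂ) = Complex.I * ((t • a) ⬝ᵥ x : ℝ) := by
    rw [smul_dotProduct, smul_eq_mul, Complex.ofReal_mul, mul_assoc, dotProduct]
  have hnorm : ∑ i, (t • a) i ^ 2 = t ^ 2 * ∑ i, a i ^ 2 := by
    simp only [Pi.smul_apply, smul_eq_mul, mul_pow, Finset.mul_sum]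
  have heval : MvPolynomial.eval (t • a) P = t ^ (2 * k) * MvPolynomial.eval a P :=
    eval_const_mul_of_isHomogeneous hP t a
  rw [integral_map hmeas.aemeasurable (by fun_prop), hμ]
  simp only [hdot]
  rw [integral_cexp_withDensity_fdens hσ0 hσ1 hP hε, hnorm, heval]
  ring_nf

/-- Under the probability measure μ with density f(·;ε,σ,P), for any unit vector a,
the pushforward of μ under x ↦ aᵀx has characteristic function
φ_a(t) = e^{-t²/2} + ε P(a) t^{2k} e^{-σ²t²/2}. -/
theorem stmt_4 (n k : ℕ) (σ : ℝ) (hσ0 : 0 < σ) (hσ1 : σ < 1)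
    (P : MvPolynomial (Fin n) ℝ) (hP : P.IsHomogeneous (2 * k)) (hP0 : P ≠ 0)
    (ε : ℝ) (hε : |ε| ≤ (Kconst n k σ P)⁻¹)
    (μ : Measure (Fin n → ℝ))
    (hμ : μ = volume.withDensity (fun x => ENNReal.ofReal (fdens n k σ ε P x)))
    (a : Fin n → ℝ) (ha : ∑ i, a i ^ 2 = 1) :
    ∀ t : ℝ,
      (∫ y : ℝ, Complex.exp (Complex.I * (t : ℂ) * (y : ℂ))
          ∂(Measure.map (fun x => ∑ i, a i * x i) μ))
        = ((Real.exp (-t^2 / 2) +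
            ε * MvPolynomial.eval a P * t^(2*k) * Real.exp (-σ^2 * t^2 / 2) : ℝ) : ℂ) := by
  simpa only [ha, mul_one] using stmt_4_general n k σ hσ0 hσ1 P hP ε hε μ hμ a
end

section
/- Let n ≥ 2 and let S₁, ..., S_N be a finite collection of (n−1)-dimensional linear subspaces of ℝⁿ. Then there exists a probability measure μ on ℝⁿ that is not Gaussian but such that for every nonzero vector a ∈ S₁ ∪ S₂ ∪ ... ∪ S_N, the pushforward of μ under x ↦ aᵀx is the Gaussian distribution on ℝ with mean 0 and variance |a|²; in particular, the orthogonal projection of μ onto each subspace S_j is the standard Gaussian distribution on S_j. -/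
open MeasureTheory Real ProbabilityTheory

/-!
Let `γ` be a Gaussian measure and `ℓ₁, …, ℓₖ` functionals with nonzero variance. Modulating `γ` by
the cosine of the centred functional `ℓ` multiplies its characteristic function at `L` by a multiple
of `cosh cov(L, ℓ)`, and products of hyperbolic cosines are linear combinations of hyperbolic
cosines, so `1 + ε ∏ⱼ (2 cosh cov(L, ℓⱼ) - 2)` is the factor produced by a density `1 + ε g` with `g`
bounded. For small `ε > 0` this density defines a probability measure `μ`. The product vanishes as
soon as `L` is uncorrelated with one of the `ℓⱼ`, so `L` has the same law under `μ` and `γ`. On a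
line where no factor vanishes it is positive and grows only exponentially, whereas a Gaussian law
would make the ratio of the two characteristic functions `exp (κ r²)` in absolute value. For proper
subspaces `Sⱼ` of a Euclidean space one takes `γ` standard and `ℓⱼ` orthogonal to `Sⱼ`.
-/

section CoshBump

variable {ι : Type*} [Fintype ι]

/-- The bump `∏ᵢ (2 cosh yᵢ - 2)`: it vanishes on the coordinate hyperplanes, is positive away from
them, and grows only exponentially. -/
noncomputable def coshBump (y : ι → ℝ) : ℝ :=
  ∏ i, (2 * cosh (y i) - 2)

lemma two_mul_cosh_sub_two_nonneg (x : ℝ) : 0 ≤ 2 * cosh x - 2 := by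
  linarith [one_le_cosh x]

lemma two_mul_cosh_sub_two_le_exp_abs (x : ℝ) : 2 * cosh x - 2 ≤ exp |x| := by
  have h : exp (-|x|) ≤ 1 := exp_le_one_iff.2 (neg_nonpos.2 (abs_nonneg x))
  rw [← cosh_abs, cosh_eq]
  linarith

lemma coshBump_pos {y : ι → ℝ} (hy : ∀ i, y i ≠ 0) : 0 < coshBump y :=
  Finset.prod_pos fun i _ ↦ by linarith [one_lt_cosh.2 (hy i)]

lemma coshBump_nonneg (y : ι → ℝ) : 0 ≤ coshBump y :=
  Finset.prod_nonneg fun i _ ↦ two_mul_cosh_sub_two_nonneg (y i)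

lemma coshBump_eq_zero {y : ι → ℝ} {i : ι} (hi : y i = 0) : coshBump y = 0 :=
  Finset.prod_eq_zero (Finset.mem_univ i) (by simp [hi])

lemma coshBump_le_exp_sum_abs (y : ι → ℝ) : coshBump y ≤ exp (∑ i, |y i|) := by
  rw [exp_sum]
  exact Finset.prod_le_prod (fun i _ ↦ two_mul_cosh_sub_two_nonneg (y i))
    fun i _ ↦ two_mul_cosh_sub_two_le_exp_abs (y i)

lemma coshBump_smul_le {r : ℝ} (hr : 0 ≤ r) (y : ι → ℝ) :
    coshBump (r • y) ≤ exp ((∑ i, |y i|) * r) := by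
  refine (coshBump_le_exp_sum_abs _).trans_eq ?_
  simp only [Pi.smul_apply, smul_eq_mul, abs_mul, abs_of_nonneg hr, mul_comm r, Finset.sum_mul]

lemma abs_one_add_mul_coshBump_smul_le {ε r : ℝ} (hε : 0 ≤ ε) (hr : 0 ≤ r) (y : ι → ℝ) :
    |1 + ε * coshBump (r • y)| ≤ (1 + ε) * exp ((∑ i, |y i|) * r) := by
  have hexp : 1 ≤ exp ((∑ i, |y i|) * r) := one_le_exp (by positivity)
  have hbump := mul_le_mul_of_nonneg_left (coshBump_smul_le hr y) hε
  rw [abs_of_nonneg (add_nonneg zero_le_one (mul_nonneg hε (coshBump_nonneg _)))]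
  linarith

end CoshBump

lemma nonpos_of_forall_exp_mul_sq_le {κ B C : ℝ}
    (h : ∀ r, 0 ≤ r → exp (κ * r ^ 2) ≤ C * exp (B * r)) : κ ≤ 0 := by
  by_contra! hκ
  have hlim : Filter.Tendsto (fun r ↦ exp (r * (κ * r + -B))) Filter.atTop Filter.atTop :=
    tendsto_exp_atTop.comp <| Filter.tendsto_id.atTop_mul_atTop₀ <|
      Filter.tendsto_atTop_add_const_right _ _ (Filter.tendsto_id.const_mul_atTop hκ)
  obtain ⟨r, hCr, hr⟩ :=
    ((hlim.eventually_gt_atTop C).and (Filter.eventually_ge_atTop 0)).exists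
  have hsplit : exp (κ * r ^ 2) = exp (r * (κ * r + -B)) * exp (B * r) := by
    rw [← exp_add]
    ring_nf
  exact (h r hr).not_gt (hsplit ▸ mul_lt_mul_of_pos_right hCr (exp_pos _))

section GaussianMeasure

open scoped BoundedContinuousFunction

variable {E : Type*} [NormedAddCommGroup E] [NormedSpace ℝ E] [MeasurableSpace E]
  {γ μ : Measure E}

lemma charFunDual_withDensity_ofReal {d : E → ℝ} (hd : Measurable d) (hd_nonneg : ∀ x, 0 ≤ d x)
    (L : StrongDual ℝ E) :
    charFunDual (γ.withDensity fun x ↦ ENNReal.ofReal (d x)) L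
      = ∫ x, d x * Complex.exp (L x * Complex.I) ∂γ := by
  rw [charFunDual_apply, integral_withDensity_eq_integral_toReal_smul (by fun_prop) (by simp)]
  simp [ENNReal.toReal_ofReal (hd_nonneg _)]

lemma isProbabilityMeasure_of_charFunDual_zero (h : charFunDual μ 0 = 1) :
    IsProbabilityMeasure μ := by
  rw [isProbabilityMeasure_iff_real]
  simpa [charFunDual_apply] using h

variable [BorelSpace E]

section CharFunDual

variable [IsGaussian γ]

lemma charFunDual_add_of_isGaussian (L ℓ : StrongDual ℝ E) :
    charFunDual γ (L + ℓ)
      = charFunDual γ L * charFunDual γ ℓ * (exp (-cov[L, ℓ; γ]) : ℝ) := by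
  have hvar : Var[⇑(L + ℓ); γ] = Var[L; γ] + 2 * cov[L, ℓ; γ] + Var[ℓ; γ] :=
    variance_add (IsGaussian.memLp_dual γ L 2 (by simp)) (IsGaussian.memLp_dual γ ℓ 2 (by simp))
  have hmean : γ[⇑(L + ℓ)] = γ[L] + γ[ℓ] :=
    integral_add (IsGaussian.integrable_dual γ L) (IsGaussian.integrable_dual γ ℓ)
  simp only [IsGaussian.charFunDual_eq, integral_complex_ofReal, hvar, hmean]
  push_cast
  simp only [← Complex.exp_add]
  ring_nf

lemma charFunDual_add_div_of_isGaussian (L ℓ : StrongDual ℝ E) :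
    charFunDual γ (L + ℓ) / charFunDual γ ℓ
      = charFunDual γ L * (exp (-cov[L, ℓ; γ]) : ℝ) := by
  have hℓ : charFunDual γ ℓ ≠ 0 := by simp [IsGaussian.charFunDual_eq]
  rw [charFunDual_add_of_isGaussian, mul_right_comm, mul_div_cancel_right₀ _ hℓ]

lemma exp_dual_mul_I_div_charFunDual (ℓ : StrongDual ℝ E) (x : E) :
    Complex.exp (ℓ x * Complex.I) / charFunDual γ ℓ
      = exp (Var[ℓ; γ] / 2) * Complex.exp ((ℓ x - γ[ℓ] : ℝ) * Complex.I) := by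
  rw [IsGaussian.charFunDual_eq, integral_complex_ofReal, ← Complex.exp_sub, Complex.ofReal_exp,
    ← Complex.exp_add]
  push_cast
  ring_nf

lemma exp_dual_mul_I_div_charFunDual_add_neg (ℓ : StrongDual ℝ E) (x : E) :
    Complex.exp (ℓ x * Complex.I) / charFunDual γ ℓ
        + Complex.exp ((-ℓ) x * Complex.I) / charFunDual γ (-ℓ)
      = 2 * (exp (Var[ℓ; γ] / 2) * cos (ℓ x - γ[ℓ]) : ℝ) := by
  have hmean : γ[⇑(-ℓ)] = -γ[ℓ] := integral_neg _
  have hvar : Var[⇑(-ℓ); γ] = Var[ℓ; γ] := variance_neg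
  have harg : (-ℓ) x - -γ[ℓ] = -(ℓ x - γ[ℓ]) := by simp [neg_add_eq_sub]
  rw [exp_dual_mul_I_div_charFunDual, exp_dual_mul_I_div_charFunDual, hvar, hmean, harg, ← mul_add,
    Complex.ofReal_neg, ← Complex.two_cos]
  push_cast
  ring

lemma norm_charFunDual_of_isGaussian (L : StrongDual ℝ E) :
    ‖charFunDual γ L‖ = exp (-Var[L; γ] / 2) := by
  rw [IsGaussian.charFunDual_eq, integral_complex_ofReal, Complex.norm_exp]
  simp [neg_div]

/-- If `μ` were Gaussian, comparing norms along `ℝ L` would give `|G (r • L)| = exp (κ r²)`; the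
growth bound then forces `κ ≤ 0`, so that `G L ≤ 1`. -/
lemma not_isGaussian_of_charFunDual_eq_mul {G : StrongDual ℝ E → ℝ}
    (hμ : ∀ L, charFunDual μ L = charFunDual γ L * G L) {L : StrongDual ℝ E} {B C : ℝ}
    (hG : ∀ r, 0 ≤ r → |G (r • L)| ≤ C * exp (B * r)) (hL : 1 < G L) : ¬ IsGaussian μ := by
  intro _
  set κ := (Var[L; γ] - Var[L; μ]) / 2 with hκ
  have habs (r : ℝ) : |G (r • L)| = exp (κ * r ^ 2) := by
    have hnorm := congrArg norm (hμ (r • L))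
    rw [norm_mul, norm_charFunDual_of_isGaussian, norm_charFunDual_of_isGaussian,
      Complex.norm_real, norm_eq_abs, FunLike.coe_smul, variance_smul,
      variance_smul] at hnorm
    rw [← mul_right_inj' (exp_ne_zero (-(r ^ 2 * Var[L; γ]) / 2)), ← hnorm, ← exp_add, hκ]
    ring_nf
  have hκ_nonpos : κ ≤ 0 := nonpos_of_forall_exp_mul_sq_le fun r hr ↦ habs r ▸ hG r hr
  have habs_one : |G L| = exp κ := by simpa using habs 1
  have hle : |G L| ≤ 1 := habs_one.trans_le (exp_le_one_iff.2 hκ_nonpos)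
  exact hle.not_gt (hL.trans_le (le_abs_self _))

end CharFunDual

section Multipliers

lemma integrable_exp_dual_mul_I [IsFiniteMeasure γ] (L : StrongDual ℝ E) :
    Integrable (fun x ↦ Complex.exp (L x * Complex.I)) γ :=
  (BoundedContinuousFunction.probCharDual L).integrable γ

lemma integrable_mul_exp_dual_mul_I [IsFiniteMeasure γ] (g : E →ᵇ ℝ) (L : StrongDual ℝ E) :
    Integrable (fun x ↦ (g x : ℂ) * Complex.exp (L x * Complex.I)) γ :=
  (integrable_exp_dual_mul_I L).bdd_mul (c := ‖g‖) (by fun_prop)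
    (.of_forall fun x ↦ (Complex.norm_real _).trans_le (g.norm_coe_le_norm x))

/-- The functions `F` on the dual space such that `charFunDual γ * F` is the Fourier transform of
a measure with a bounded continuous density with respect to `γ`. -/
def charFunMultipliers (γ : Measure E) [IsFiniteMeasure γ] :
    Submodule ℝ (StrongDual ℝ E → ℝ) where
  carrier := {F | ∃ g : E →ᵇ ℝ, ∀ L,
    ∫ x, g x * Complex.exp (L x * Complex.I) ∂γ = charFunDual γ L * F L}
  zero_mem' := ⟨0, by simp⟩
  add_mem' := by
    rintro F₁ F₂ ⟨g₁, h₁⟩ ⟨g₂, h₂⟩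
    refine ⟨g₁ + g₂, fun L ↦ ?_⟩
    simp only [BoundedContinuousFunction.coe_add, Pi.add_apply, Complex.ofReal_add, add_mul,
      integral_add (integrable_mul_exp_dual_mul_I g₁ L) (integrable_mul_exp_dual_mul_I g₂ L), h₁,
      h₂, mul_add]
  smul_mem' := by
    rintro c F ⟨g, h⟩
    refine ⟨c • g, fun L ↦ ?_⟩
    simp only [BoundedContinuousFunction.coe_smul, smul_eq_mul, Complex.ofReal_mul, mul_assoc,
      integral_const_mul, h, Pi.smul_apply]
    ring

/-- Modulating `γ` by the cosine of the centred `ℓ` averages its characteristic function over the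
shifts by `ℓ` and `-ℓ`. -/
lemma cosh_covariance_mem_charFunMultipliers [IsGaussian γ] (ℓ : StrongDual ℝ E) :
    (fun L : StrongDual ℝ E ↦ cosh cov[L, ℓ; γ]) ∈ charFunMultipliers γ := by
  let g : E →ᵇ ℝ := .ofNormedAddCommGroup
    (fun x ↦ exp (Var[ℓ; γ] / 2) * cos (ℓ x - γ[ℓ])) (by fun_prop) (exp (Var[ℓ; γ] / 2)) fun x ↦ by
      simpa using mul_le_of_le_one_right (exp_pos _).le (abs_cos_le_one (ℓ x - γ[ℓ]))
  refine ⟨g, fun L ↦ ?_⟩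
  have hprod (x : E) : (g x : ℂ) * Complex.exp (L x * Complex.I)
      = (Complex.exp ((L + ℓ) x * Complex.I) / charFunDual γ ℓ
        + Complex.exp ((L + -ℓ) x * Complex.I) / charFunDual γ (-ℓ)) / 2 := by
    simp only [FunLike.coe_add, Pi.add_apply, Complex.ofReal_add, add_mul, Complex.exp_add,
      mul_div_assoc, ← mul_add, exp_dual_mul_I_div_charFunDual_add_neg]
    simp only [g, BoundedContinuousFunction.coe_ofNormedAddCommGroup]
    ring
  calc ∫ x, (g x : ℂ) * Complex.exp (L x * Complex.I) ∂γ
    _ = (charFunDual γ (L + ℓ) / charFunDual γ ℓ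
        + charFunDual γ (L + -ℓ) / charFunDual γ (-ℓ)) / 2 := by
      simp only [hprod]
      rw [integral_div, integral_add ((integrable_exp_dual_mul_I _).div_const _)
        ((integrable_exp_dual_mul_I _).div_const _), integral_div, integral_div]
      simp only [charFunDual_apply]
    _ = charFunDual γ L * (cosh cov[L, ℓ; γ] : ℝ) := by
      rw [charFunDual_add_div_of_isGaussian, charFunDual_add_div_of_isGaussian, FunLike.coe_neg,
        covariance_neg_right, neg_neg, cosh_eq]
      push_cast
      ring

/-- The extra factor `cosh cov[L, m; γ]` makes the induction on `s` close up, through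
`cosh a * cosh b = (cosh (a + b) + cosh (a - b)) / 2`. -/
lemma prod_mul_cosh_mem_charFunMultipliers [IsGaussian γ] {ι : Type*} (s : Finset ι)
    (ℓ : ι → StrongDual ℝ E) (m : StrongDual ℝ E) :
    (fun L : StrongDual ℝ E ↦ (∏ i ∈ s, (2 * cosh cov[L, ℓ i; γ] - 2)) * cosh cov[L, m; γ])
      ∈ charFunMultipliers γ := by
  classical
  induction s using Finset.induction_on generalizing m with
  | empty => simpa using cosh_covariance_mem_charFunMultipliers m
  | insert i s hi ih =>
    have hmem := add_mem (add_mem (ih (m + ℓ i)) (ih (m - ℓ i)))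
      (Submodule.smul_mem _ (-2 : ℝ) (ih m))
    convert hmem using 1
    ext L
    have hL (ℓ : StrongDual ℝ E) : MemLp ℓ 2 γ := IsGaussian.memLp_dual γ ℓ 2 (by simp)
    simp only [Pi.add_apply, Pi.smul_apply, smul_eq_mul, Finset.prod_insert hi,
      FunLike.coe_add, FunLike.coe_sub,
      covariance_add_right (hL L) (hL m) (hL (ℓ i)),
      covariance_sub_right (hL L) (hL m) (hL (ℓ i)), cosh_add, cosh_sub]
    ring

lemma coshBump_covariance_mem_charFunMultipliers [IsGaussian γ] {ι : Type*} [Fintype ι]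
    (ℓ : ι → StrongDual ℝ E) :
    (fun L : StrongDual ℝ E ↦ coshBump fun i ↦ cov[L, ℓ i; γ]) ∈ charFunMultipliers γ := by
  simpa [coshBump] using prod_mul_cosh_mem_charFunMultipliers Finset.univ ℓ 0

end Multipliers

section Perturbation

lemma exists_charFunDual_eq_mul_one_add [IsProbabilityMeasure γ] {F : StrongDual ℝ E → ℝ}
    (hF : F ∈ charFunMultipliers γ) (hF_zero : F 0 = 0) :
    ∃ ε > 0, ∃ μ : Measure E, IsProbabilityMeasure μ ∧
      ∀ L, charFunDual μ L = charFunDual γ L * (1 + ε * F L : ℝ) := by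
  obtain ⟨g, hg⟩ := hF
  set ε := (‖g‖ + 1)⁻¹
  have hε : 0 < ε := by positivity
  have hd_nonneg (x : E) : 0 ≤ 1 + ε * g x := by
    have hεg : ε * ‖g‖ ≤ 1 := by
      rw [← div_eq_inv_mul]
      exact div_le_one_of_le₀ (by linarith) (by positivity)
    linarith [mul_le_mul_of_nonneg_left (g.neg_norm_le_apply x) hε.le]
  have hchar (L : StrongDual ℝ E) :
      charFunDual (γ.withDensity fun x ↦ ENNReal.ofReal (1 + ε * g x)) L
        = charFunDual γ L * (1 + ε * F L : ℝ) := by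
    rw [charFunDual_withDensity_ofReal (by fun_prop) hd_nonneg]
    simp only [Complex.ofReal_add, Complex.ofReal_one, Complex.ofReal_mul, add_mul, one_mul,
      mul_assoc]
    rw [integral_add (integrable_exp_dual_mul_I L)
      ((integrable_mul_exp_dual_mul_I g L).const_mul _), integral_const_mul, hg,
      ← charFunDual_apply]
    ring
  exact ⟨ε, hε, _, isProbabilityMeasure_of_charFunDual_zero (by
    simp [hchar, hF_zero, charFunDual_apply]), hchar⟩

lemma map_eq_map_of_forall_charFunDual_smul_eq {ν : Measure E} [IsFiniteMeasure μ]
    [IsFiniteMeasure ν] {L : StrongDual ℝ E}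
    (h : ∀ r : ℝ, charFunDual μ (r • L) = charFunDual ν (r • L)) : μ.map L = ν.map L :=
  Measure.ext_of_charFun <| funext fun r ↦ by simp only [charFun_map_eq_charFunDual_smul, h]

lemma exists_forall_covariance_ne_zero [IsGaussian γ] {ι : Type*} [Finite ι]
    {ℓ : ι → StrongDual ℝ E} (hℓ : ∀ i, Var[ℓ i; γ] ≠ 0) :
    ∃ L : StrongDual ℝ E, ∀ i, cov[L, ℓ i; γ] ≠ 0 := by
  have hL (L : StrongDual ℝ E) : MemLp L 2 γ := IsGaussian.memLp_dual γ L 2 (by simp)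
  let covLeft (i : ι) : Module.Dual ℝ (StrongDual ℝ E) :=
    { toFun L := cov[L, ℓ i; γ]
      map_add' L L' := covariance_add_left (hL L) (hL L') (hL (ℓ i))
      map_smul' c L := covariance_smul_left c }
  refine Module.Dual.exists_forall_ne_zero_of_forall_exists covLeft fun i ↦ ⟨ℓ i, ?_⟩
  simpa only [covLeft, LinearMap.coe_mk, AddHom.coe_mk,
    covariance_self (hL (ℓ i)).aemeasurable] using hℓ i

theorem exists_not_isGaussian_forall_map_eq [IsGaussian γ] {ι : Type*} [Finite ι] [Nonempty ι]
    {ℓ : ι → StrongDual ℝ E} (hℓ : ∀ i, Var[ℓ i; γ] ≠ 0) :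
    ∃ μ : Measure E, IsProbabilityMeasure μ ∧ ¬ IsGaussian μ ∧
      ∀ i (L : StrongDual ℝ E), cov[L, ℓ i; γ] = 0 → μ.map L = γ.map L := by
  cases nonempty_fintype ι
  have hsmul (r : ℝ) (L : StrongDual ℝ E) :
      (fun i ↦ cov[⇑(r • L), ℓ i; γ]) = r • fun i ↦ cov[L, ℓ i; γ] :=
    funext fun i ↦ covariance_smul_left r
  obtain ⟨ε, hε, μ, hμ, hchar⟩ := exists_charFunDual_eq_mul_one_add
    (coshBump_covariance_mem_charFunMultipliers (γ := γ) ℓ)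
    (coshBump_eq_zero (i := Classical.arbitrary ι) (by simp))
  refine ⟨μ, hμ, ?_, fun i L hL ↦ map_eq_map_of_forall_charFunDual_smul_eq fun r ↦ ?_⟩
  · obtain ⟨L, hL⟩ := exists_forall_covariance_ne_zero hℓ
    refine not_isGaussian_of_charFunDual_eq_mul hchar (L := L)
      (B := ∑ i, |cov[L, ℓ i; γ]|) (C := 1 + ε) (fun r hr ↦ ?_)
      (lt_add_of_pos_right 1 (mul_pos hε (coshBump_pos hL)))
    rw [hsmul]
    exact abs_one_add_mul_coshBump_smul_le hε.le hr _
  · rw [hchar, hsmul, coshBump_eq_zero (i := i) (by simp [hL])]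
    simp

end Perturbation

end GaussianMeasure

section StdGaussian

open scoped RealInnerProductSpace

variable {E : Type*} [NormedAddCommGroup E] [InnerProductSpace ℝ E] [FiniteDimensional ℝ E]
  [MeasurableSpace E] [BorelSpace E]

lemma covariance_innerSL_stdGaussian (a b : E) :
    cov[innerSL ℝ a, innerSL ℝ b; stdGaussian E] = ⟪a, b⟫ := by
  have hcov := covarianceBilin_apply_eq_cov (μ := stdGaussian E) IsGaussian.memLp_two_id a b
  rw [covarianceBilin_stdGaussian] at hcov
  exact hcov.symm

lemma stdGaussian_map_innerSL (a : E) :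
    (stdGaussian E).map (innerSL ℝ a) = gaussianReal 0 (‖a‖ ^ 2).toNNReal := by
  rw [IsGaussian.map_eq_gaussianReal, integral_strongDual_stdGaussian, variance_dual_stdGaussian,
    innerSL_apply_norm]

theorem exists_not_isGaussian_forall_mem_map_innerSL_eq [Nontrivial E] {κ : Type*} [Finite κ]
    {S : κ → Submodule ℝ E} (hS : ∀ j, S j ≠ ⊤) :
    ∃ μ : Measure E, IsProbabilityMeasure μ ∧ ¬ IsGaussian μ ∧
      ∀ j, ∀ a ∈ S j, μ.map (innerSL ℝ a) = gaussianReal 0 (‖a‖ ^ 2).toNNReal := by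
  -- `⊥` is adjoined because the perturbation is trivial for an empty family.
  let T : Option κ → Submodule ℝ E := fun j ↦ j.elim ⊥ S
  have hT (j : Option κ) : (T j)ᗮ ≠ ⊥ := by
    rw [Ne, Submodule.orthogonal_eq_bot_iff]
    cases j with
    | none => exact bot_ne_top
    | some j => exact hS j
  choose b hb hb_ne using fun j ↦ Submodule.exists_mem_ne_zero_of_ne_bot (hT j)
  have hvar (j : Option κ) : Var[innerSL ℝ (b j); stdGaussian E] ≠ 0 := by
    rw [variance_dual_stdGaussian, innerSL_apply_norm]
    exact pow_ne_zero 2 (norm_ne_zero_iff.2 (hb_ne j))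
  obtain ⟨μ, hμ, hμ_gauss, hmap⟩ := exists_not_isGaussian_forall_map_eq hvar
  refine ⟨μ, hμ, hμ_gauss, fun j a ha ↦ ?_⟩
  have hcov : cov[innerSL ℝ a, innerSL ℝ (b (some j)); stdGaussian E] = 0 := by
    rw [covariance_innerSL_stdGaussian]
    exact (T (some j)).inner_right_of_mem_orthogonal ha (hb (some j))
  rw [hmap (some j) _ hcov, stdGaussian_map_innerSL]

end StdGaussian

section EuclideanCoordinates

variable {ι : Type*} [Fintype ι]

lemma isGaussian_map_toLp_of_forall_integral_eq {μ : Measure (ι → ℝ)} [IsFiniteMeasure μ]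
    {m : ι → ℝ} {Sig : Matrix ι ι ℝ} (hSig : Sig.PosSemidef)
    (h : ∀ t : ι → ℝ, ∫ x, Complex.exp (Complex.I * ((∑ i, t i * x i : ℝ) : ℂ)) ∂μ
      = Complex.exp (Complex.I * ((∑ i, m i * t i : ℝ) : ℂ)
        - ((∑ i, ∑ j, t i * Sig i j * t j : ℝ) : ℂ) / 2)) :
    IsGaussian (μ.map (WithLp.toLp 2)) := by
  classical
  suffices μ.map (WithLp.toLp 2) = multivariateGaussian (WithLp.toLp 2 m) Sig from
    this ▸ inferInstance
  refine Measure.ext_of_charFun (funext fun t ↦ ?_)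
  rw [charFun_multivariateGaussian hSig, charFun_apply,
    integral_map (by fun_prop) (by fun_prop)]
  convert h t using 2
  · simp [PiLp.inner_apply, mul_comm]
  · simp [PiLp.inner_apply, mul_comm, dotProduct, Matrix.mulVec, Finset.mul_sum, mul_assoc,
      mul_left_comm]

lemma map_sum_mul_map_ofLp (μ : Measure (EuclideanSpace ℝ ι)) (a : ι → ℝ) :
    (μ.map WithLp.ofLp).map (fun x : ι → ℝ ↦ ∑ i, a i * x i)
      = μ.map (innerSL ℝ (WithLp.toLp 2 a)) := by
  rw [Measure.map_map (by fun_prop) (by fun_prop)]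
  congr 1 with x
  simp [PiLp.inner_apply, mul_comm]

end EuclideanCoordinates

theorem stmt_8_general {ι κ : Type*} [Fintype ι] [Nonempty ι] [Finite κ]
    (S : κ → Submodule ℝ (ι → ℝ)) (hS : ∀ j, S j ≠ ⊤) :
    ∃ μ : Measure (ι → ℝ), IsProbabilityMeasure μ ∧
      (¬ ∃ (m : ι → ℝ) (Sig : Matrix ι ι ℝ), Sig.PosSemidef ∧
        ∀ t : ι → ℝ,
          (∫ x, Complex.exp (Complex.I * ((∑ i, t i * x i : ℝ) : ℂ)) ∂μ)
            = Complex.exp (Complex.I * ((∑ i, m i * t i : ℝ) : ℂ)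
                - ((∑ i, ∑ j, t i * Sig i j * t j : ℝ) : ℂ) / 2)) ∧
      ∀ a : ι → ℝ, (∃ j, a ∈ S j) →
        Measure.map (fun x => ∑ i, a i * x i) μ
          = gaussianReal 0 (Real.toNNReal (∑ i, a i ^ 2)) := by
  let e : EuclideanSpace ℝ ι ≃ₗ[ℝ] (ι → ℝ) := WithLp.linearEquiv 2 ℝ (ι → ℝ)
  have hSe (j : κ) : (S j).comap e.toLinearMap ≠ ⊤ :=
    (Submodule.comap_injective_of_surjective e.surjective).ne (hS j)
  obtain ⟨μ, hμ, hμ_gauss, hmap⟩ := exists_not_isGaussian_forall_mem_map_innerSL_eq hSe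
  have hμ_ofLp : IsProbabilityMeasure (μ.map WithLp.ofLp) :=
    Measure.isProbabilityMeasure_map (by fun_prop)
  refine ⟨μ.map WithLp.ofLp, hμ_ofLp, ?_, ?_⟩
  · rintro ⟨m, Sig, hSig, hchar⟩
    have hgauss := isGaussian_map_toLp_of_forall_integral_eq hSig hchar
    rw [Measure.map_map (by fun_prop) (by fun_prop)] at hgauss
    exact hμ_gauss (by simpa [Function.comp_def] using hgauss)
  · rintro a ⟨j, ha⟩
    rw [map_sum_mul_map_ofLp, hmap j (WithLp.toLp 2 a) ha, EuclideanSpace.real_norm_sq_eq]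

/-- Given finitely many (n−1)-dimensional subspaces of ℝⁿ, there is a non-Gaussian
probability measure μ on ℝⁿ such that for every nonzero a in the union of the subspaces,
the pushforward of μ under x ↦ aᵀx is Gaussian with mean 0 and variance |a|². -/
theorem stmt_8 (n : ℕ) (hn : 2 ≤ n) (N : ℕ) (S : Fin N → Submodule ℝ (Fin n → ℝ))
    (hS : ∀ j, Module.finrank ℝ (S j) = n - 1) :
    ∃ μ : Measure (Fin n → ℝ), IsProbabilityMeasure μ ∧
      (¬ ∃ (m : Fin n → ℝ) (Sig : Matrix (Fin n) (Fin n) ℝ), Sig.PosSemidef ∧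
        ∀ t : Fin n → ℝ,
          (∫ x, Complex.exp (Complex.I * ((∑ i, t i * x i : ℝ) : ℂ)) ∂μ)
            = Complex.exp (Complex.I * ((∑ i, m i * t i : ℝ) : ℂ)
                - ((∑ i, ∑ j, t i * Sig i j * t j : ℝ) : ℂ) / 2)) ∧
      ∀ a : Fin n → ℝ, a ≠ 0 → (∃ j, a ∈ S j) →
        Measure.map (fun x => ∑ i, a i * x i) μ
          = gaussianReal 0 (Real.toNNReal (∑ i, a i ^ 2)) := by
  have : Nonempty (Fin n) := ⟨⟨0, by omega⟩⟩
  obtain ⟨μ, hμ, hμ_gauss, hmap⟩ := stmt_8_general S fun j ↦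
    (Submodule.lt_top_of_finrank_lt_finrank (by rw [hS j, Module.finrank_fin_fun]; omega)).ne
  exact ⟨μ, hμ, hμ_gauss, fun a _ ↦ hmap a⟩
end

section
/- Let n be even and let P(t₁,...,tₙ) = t₁t₂···tₙ ∏_{i>j} (t_i² − t_j²), a homogeneous polynomial of degree n². Then its renormalized version is given by the Hermite determinant :P:(x₁,...,xₙ) = det[ H_{2i−1}(x_j) ]_{i,j=1,...,n}. In particular, :P: is antisymmetric in the variables x₁, ..., xₙ: interchanging any two variables changes its sign. -/
open MeasureTheory Real ProbabilityTheory

/-- The polynomial P(t) = t₁⋯tₙ ∏_{i>j}(t_i² − t_j²). -/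
noncomputable def Pex (n : ℕ) : MvPolynomial (Fin n) ℝ :=
  (∏ i, MvPolynomial.X i) *
    ∏ p ∈ Finset.univ.filter (fun p : Fin n × Fin n => p.2 < p.1),
      (MvPolynomial.X p.1 ^ 2 - MvPolynomial.X p.2 ^ 2)

/-!
A Vandermonde evaluation in the variables `t_j²` shows that `P = det[t_j ^ (2i+1)]`, indices
starting at `0`. Renormalization is linear and sends each monomial to the corresponding product of
Hermite polynomials, hence it may be carried out entry by entry in the Leibniz expansion of a
determinant whose `j`-th column consists of powers of `t_j`.
-/

section

open Finset Matrix MvPolynomial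

/-- The map `P ↦ :P:(x)` as a linear functional, for substituting Hermite polynomials for powers in
sums of monomials. -/
noncomputable def renormLinearMap {n : ℕ} (x : Fin n → ℝ) : MvPolynomial (Fin n) ℝ →ₗ[ℝ] ℝ :=
  (basisMonomials (Fin n) ℝ).constr ℝ fun m => ∏ i, hermiteR (m i) (x i)

lemma renormLinearMap_apply {n : ℕ} (x : Fin n → ℝ) (P : MvPolynomial (Fin n) ℝ) :
    renormLinearMap x P = renorm P x :=
  Module.Basis.constr_apply ..

lemma renormLinearMap_prod_X_pow {n : ℕ} (x : Fin n → ℝ) (e : Fin n → ℕ) :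
    renormLinearMap x (∏ i, X i ^ e i) = ∏ i, hermiteR (e i) (x i) := by
  have prod_eq_basis : ∏ i, (X i : MvPolynomial (Fin n) ℝ) ^ e i =
      basisMonomials (Fin n) ℝ (Finsupp.equivFunOnFinite.symm e) := by
    simp only [coe_basisMonomials, monic_monomial_eq, Finsupp.prod_fintype, pow_zero, implies_true,
      Finsupp.equivFunOnFinite_symm_apply_apply]
  rw [prod_eq_basis, renormLinearMap, Module.Basis.constr_basis]
  simp only [Finsupp.equivFunOnFinite_symm_apply_apply]

theorem renorm_det_X_pow {n : ℕ} (e : Fin n → Fin n → ℕ) (x : Fin n → ℝ) :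
    renorm (det (of fun i j => (X j : MvPolynomial (Fin n) ℝ) ^ e i j)) x =
      det (of fun i j => hermiteR (e i j) (x j)) := by
  simp only [← renormLinearMap_apply, det_apply, of_apply, map_sum, Units.smul_def, map_zsmul,
    renormLinearMap_prod_X_pow]

lemma isHomogeneous_det {ι σ R : Type*} [Fintype ι] [DecidableEq ι] [CommRing R]
    {M : Matrix ι ι (MvPolynomial σ R)} {d : ι → ℕ} (hM : ∀ i j, (M i j).IsHomogeneous (d i)) :
    M.det.IsHomogeneous (∑ i, d i) := by
  rw [det_apply]
  refine IsHomogeneous.sum _ _ _ fun s _ => ?_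
  have leibniz_term : (∏ i, M (s i) i).IsHomogeneous (∑ i, d i) := by
    rw [← Equiv.sum_comp s d]
    exact IsHomogeneous.prod _ _ _ fun i _ => hM (s i) i
  rw [Units.smul_def]
  exact zsmul_mem (K := homogeneousSubmodule σ R _) leibniz_term _

lemma det_pow_mul_add {R : Type*} [CommRing R] {n : ℕ} (v : Fin n → R) (a b : ℕ) :
    det (of fun i j : Fin n => v j ^ (a * (i : ℕ) + b)) =
      (∏ i, v i ^ b) * ∏ i, ∏ j ∈ Ioi i, (v j ^ a - v i ^ a) := by
  rw [← det_vandermonde fun j => v j ^ a, ← det_transpose (vandermonde _), ← det_mul_row]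
  congr 2
  ext i j
  rw [transpose_apply, vandermonde_apply, ← pow_mul, pow_add, mul_comm]

theorem Pex_eq_det (n : ℕ) :
    Pex n = det (of fun i j : Fin n => (X j : MvPolynomial (Fin n) ℝ) ^ (2 * (i : ℕ) + 1)) := by
  rw [det_pow_mul_add, Pex, prod_finset_product_right _ univ Ioi (by simp)]
  simp only [pow_one]

lemma sum_fin_two_mul_add_one (n : ℕ) : ∑ i : Fin n, (2 * (i : ℕ) + 1) = n ^ 2 := by
  induction n with
  | zero => rfl
  | succ n ih =>
    simp only [Fin.sum_univ_castSucc, Fin.val_castSucc, ih, Fin.val_last]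
    ring

theorem isHomogeneous_Pex (n : ℕ) : (Pex n).IsHomogeneous (n ^ 2) := by
  rw [Pex_eq_det, ← sum_fin_two_mul_add_one]
  exact isHomogeneous_det fun i j => isHomogeneous_X_pow j (2 * (i : ℕ) + 1)

theorem renorm_Pex (n : ℕ) (x : Fin n → ℝ) :
    renorm (Pex n) x = det (of fun i j : Fin n => hermiteR (2 * (i : ℕ) + 1) (x j)) := by
  rw [Pex_eq_det, renorm_det_X_pow]

theorem renorm_Pex_comp_swap {n : ℕ} (x : Fin n → ℝ) {i j : Fin n} (hij : i ≠ j) :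
    renorm (Pex n) (x ∘ Equiv.swap i j) = -renorm (Pex n) x := by
  let hermiteMatrix : Matrix (Fin n) (Fin n) ℝ := of fun k l => hermiteR (2 * (k : ℕ) + 1) (x l)
  calc
    renorm (Pex n) (x ∘ Equiv.swap i j)
      = (hermiteMatrix.submatrix id (Equiv.swap i j)).det := renorm_Pex n _
    _ = Equiv.Perm.sign (Equiv.swap i j) * hermiteMatrix.det := det_permute' _ _
    _ = -hermiteMatrix.det := by simp [Equiv.Perm.sign_swap hij]
    _ = -renorm (Pex n) x := by rw [renorm_Pex]

end

theorem stmt_10_general (n : ℕ) :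
    (Pex n).IsHomogeneous (n ^ 2) ∧
    (∀ x : Fin n → ℝ, renorm (Pex n) x =
      Matrix.det (Matrix.of fun i j : Fin n => hermiteR (2 * (i : ℕ) + 1) (x j))) ∧
    (∀ (x : Fin n → ℝ) (i j : Fin n), i ≠ j →
      renorm (Pex n) (x ∘ Equiv.swap i j) = -renorm (Pex n) x) :=
  ⟨isHomogeneous_Pex n, renorm_Pex n, fun x _ _ => renorm_Pex_comp_swap x⟩

/-- For n even, P(t) = t₁⋯tₙ ∏_{i>j}(t_i² − t_j²) is homogeneous of degree n², its
renormalized version is the Hermite determinant det[H_{2i−1}(x_j)], and the latter is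
antisymmetric: interchanging any two variables changes its sign. -/
theorem stmt_10 (n : ℕ) (hn : Even n) :
    (Pex n).IsHomogeneous (n^2) ∧
    (∀ x : Fin n → ℝ,
      renorm (Pex n) x = Matrix.det (Matrix.of fun i j : Fin n => hermiteR (2*(i:ℕ)+1) (x j))) ∧
    (∀ (x : Fin n → ℝ) (i j : Fin n), i ≠ j →
      renorm (Pex n) (x ∘ Equiv.swap i j) = - renorm (Pex n) x) :=
  stmt_10_general n
end

section
/- For every real number η with |η| ≤ e²/4, the function f_η(x₁,x₂) = (2π)^{-1} e^{-(x₁²+x₂²)/2} [1 + η (x₁³x₂ − x₂³x₁) e^{-(x₁²+x₂²)/2}] is a probability density function on ℝ²: f_η(x₁,x₂) ≥ 0 for all (x₁,x₂) and ∫_{ℝ²} f_η(x₁,x₂) dx₁ dx₂ = 1. -/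
open MeasureTheory Real

open ProbabilityTheory
open scoped NNReal

/-!
Put `h(x₁, x₂) = η (x₁³x₂ - x₂³x₁) e^{-r²/2}` with `r² = x₁² + x₂²`. The Gaussian factor is
symmetric under `x₁ ↔ x₂` and `h` is antisymmetric, so the perturbation does not change the total
mass. For positivity, `|x₁³x₂ - x₂³x₁| ≤ r⁴/4`, and `t² e^{-t}` with `t = r²/2` has maximum `4 e⁻²`
at `t = 2`; hence `|h| ≤ 4 e⁻² |η| ≤ 1`.
-/

section Antisymmetric

variable {α : Type*} [MeasurableSpace α] {μ : Measure α}

theorem integral_eq_zero_of_comp_eq_neg {E : Type*} [NormedAddCommGroup E] [NormedSpace ℝ E]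
    {T : α ≃ᵐ α} (hT : MeasurePreserving T μ μ) {f : α → E} (hf : ∀ x, f (T x) = -f x) :
    ∫ x, f x ∂μ = 0 := by
  have : IsAddTorsionFree E := .of_isTorsionFree ℝ E
  rw [← self_eq_neg, ← integral_neg, ← hT.integral_comp']
  simp only [hf]

theorem integral_mul_one_add_of_comp_eq_neg {T : α ≃ᵐ α} (hT : MeasurePreserving T μ μ)
    {g h : α → ℝ} {C : ℝ} (hg : Integrable g μ) (hh : AEStronglyMeasurable h μ)
    (abs_h_le : ∀ x, |h x| ≤ C) (g_symm : ∀ x, g (T x) = g x) (h_antisymm : ∀ x, h (T x) = -h x) :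
    ∫ x, g x * (1 + h x) ∂μ = ∫ x, g x ∂μ := by
  have hgh : Integrable (fun x => g x * h x) μ := hg.mul_bdd hh (.of_forall abs_h_le)
  have gh_zero : ∫ x, g x * h x ∂μ = 0 :=
    integral_eq_zero_of_comp_eq_neg hT fun x => by rw [g_symm, h_antisymm, mul_neg]
  simp only [mul_add, mul_one]
  rw [integral_add hg hgh, gh_zero, add_zero]

theorem integral_prod_mul_one_add_of_swap_eq_neg [SFinite μ] {p : α → ℝ} {h : α × α → ℝ} {C : ℝ}
    (hp : Integrable p μ) (hh : AEStronglyMeasurable h (μ.prod μ)) (abs_h_le : ∀ x, |h x| ≤ C)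
    (h_antisymm : ∀ x, h x.swap = -h x) :
    ∫ x, p x.1 * p x.2 * (1 + h x) ∂μ.prod μ = (∫ x, p x ∂μ) ^ 2 := by
  have swap_preserving : MeasurePreserving MeasurableEquiv.prodComm (μ.prod μ) (μ.prod μ) :=
    Measure.measurePreserving_swap
  rw [integral_mul_one_add_of_comp_eq_neg swap_preserving (hp.mul_prod hp) hh abs_h_le
    (fun _ => mul_comm _ _) h_antisymm, integral_prod_mul, sq]

end Antisymmetric

theorem pow_mul_exp_neg_le {t : ℝ} (ht : 0 ≤ t) (n : ℕ) :
    t ^ n * exp (-t) ≤ n ^ n * exp (-n) := by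
  rcases n.eq_zero_or_pos with rfl | hn
  · simpa using ht
  have hn' : (n : ℝ) ≠ 0 := by positivity
  calc t ^ n * exp (-t) = n ^ n * (t / n * exp (-(t / n))) ^ n := by
        rw [mul_pow, ← exp_nat_mul, div_pow]
        field_simp
    _ ≤ n ^ n * exp (-1) ^ n := by
        gcongr
        exact mul_exp_neg_le_exp_neg_one _
    _ = n ^ n * exp (-n) := by rw [← exp_nat_mul, mul_neg_one]

theorem four_mul_abs_pow_three_mul_sub_le_sq_add_sq_sq {R : Type*} [CommRing R] [LinearOrder R]
    [IsStrictOrderedRing R] (x y : R) :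
    4 * |x ^ 3 * y - y ^ 3 * x| ≤ (x ^ 2 + y ^ 2) ^ 2 := by
  have factorization : 2 * (x ^ 3 * y - y ^ 3 * x) = 2 * x * y * (x ^ 2 - y ^ 2) := by ring
  calc 4 * |x ^ 3 * y - y ^ 3 * x| = 2 * |2 * (x ^ 3 * y - y ^ 3 * x)| := by
        rw [abs_mul, abs_two]
        ring
    _ = 2 * |2 * x * y| * |x ^ 2 - y ^ 2| := by rw [factorization, abs_mul, ← mul_assoc]
    _ ≤ |2 * x * y| ^ 2 + |x ^ 2 - y ^ 2| ^ 2 := two_mul_le_add_sq _ _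
    _ = (x ^ 2 + y ^ 2) ^ 2 := by
        rw [sq_abs, sq_abs]
        ring

theorem abs_pow_three_mul_sub_mul_exp_le (x y : ℝ) :
    |x ^ 3 * y - y ^ 3 * x| * exp (-(x ^ 2 + y ^ 2) / 2) ≤ 4 * exp (-2) := by
  calc |x ^ 3 * y - y ^ 3 * x| * exp (-(x ^ 2 + y ^ 2) / 2)
      ≤ ((x ^ 2 + y ^ 2) / 2) ^ 2 * exp (-((x ^ 2 + y ^ 2) / 2)) := by
        rw [neg_div]
        gcongr
        linarith [four_mul_abs_pow_three_mul_sub_le_sq_add_sq_sq x y]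
    _ ≤ (2 : ℕ) ^ 2 * exp (-(2 : ℕ)) := pow_mul_exp_neg_le (by positivity) 2
    _ = 4 * exp (-2) := by norm_num

theorem abs_mul_pow_three_mul_sub_mul_exp_le_one {η : ℝ} (hη : |η| ≤ exp 2 / 4) (x y : ℝ) :
    |η * (x ^ 3 * y - y ^ 3 * x) * exp (-(x ^ 2 + y ^ 2) / 2)| ≤ 1 := by
  rw [abs_mul, abs_mul, abs_exp, mul_assoc]
  calc |η| * (|x ^ 3 * y - y ^ 3 * x| * exp (-(x ^ 2 + y ^ 2) / 2))
      ≤ exp 2 / 4 * (4 * exp (-2)) :=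
        mul_le_mul hη (abs_pow_three_mul_sub_mul_exp_le x y) (by positivity) (by positivity)
    _ = 1 := by
        rw [exp_neg]
        field_simp

theorem gaussianPDFReal_zero_mul_gaussianPDFReal_zero (v : ℝ≥0) (x y : ℝ) :
    gaussianPDFReal 0 v x * gaussianPDFReal 0 v y =
      (2 * π * v)⁻¹ * exp (-(x ^ 2 + y ^ 2) / (2 * v)) := by
  have sqrt_sq : √(2 * π * v) * √(2 * π * v) = 2 * π * v := mul_self_sqrt (by positivity)
  simp only [gaussianPDFReal, sub_zero]
  rw [mul_mul_mul_comm, ← mul_inv, sqrt_sq, ← exp_add, ← add_div, neg_add]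

/-- For |η| ≤ e²/4, f_η(x₁,x₂) = (2π)⁻¹ e^{-(x₁²+x₂²)/2}[1 + η(x₁³x₂ − x₂³x₁)e^{-(x₁²+x₂²)/2}]
is a probability density on ℝ². -/
theorem stmt_14 (η : ℝ) (hη : |η| ≤ Real.exp 2 / 4) :
    (∀ x : ℝ × ℝ, 0 ≤ (2*π)⁻¹ * Real.exp (-(x.1^2 + x.2^2) / 2) *
      (1 + η * (x.1^3 * x.2 - x.2^3 * x.1) * Real.exp (-(x.1^2 + x.2^2) / 2))) ∧
    (∫ x : ℝ × ℝ, (2*π)⁻¹ * Real.exp (-(x.1^2 + x.2^2) / 2) *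
      (1 + η * (x.1^3 * x.2 - x.2^3 * x.1) * Real.exp (-(x.1^2 + x.2^2) / 2))) = 1 := by
  have perturbation_le (x : ℝ × ℝ) := abs_mul_pow_three_mul_sub_mul_exp_le_one hη x.1 x.2
  have gaussian_eq (x : ℝ × ℝ) : (2 * π)⁻¹ * exp (-(x.1 ^ 2 + x.2 ^ 2) / 2) =
      gaussianPDFReal 0 1 x.1 * gaussianPDFReal 0 1 x.2 := by
    simp [gaussianPDFReal_zero_mul_gaussianPDFReal_zero]
  refine ⟨fun x => mul_nonneg (by positivity) ?_, ?_⟩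
  · linarith [neg_le_of_abs_le (perturbation_le x)]
  have perturbation_antisymm (x : ℝ × ℝ) :
      η * (x.2 ^ 3 * x.1 - x.1 ^ 3 * x.2) * exp (-(x.2 ^ 2 + x.1 ^ 2) / 2) =
        -(η * (x.1 ^ 3 * x.2 - x.2 ^ 3 * x.1) * exp (-(x.1 ^ 2 + x.2 ^ 2) / 2)) := by
    rw [add_comm (x.2 ^ 2)]
    ring
  simp only [gaussian_eq]
  rw [Measure.volume_eq_prod, integral_prod_mul_one_add_of_swap_eq_neg
    (integrable_gaussianPDFReal 0 1) (by fun_prop) perturbation_le perturbation_antisymm,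
    integral_gaussianPDFReal_eq_one 0 one_ne_zero, one_pow]
end

section
/- Let μ be a probability measure on ℝⁿ (n ≥ 2) and let S₁, S₂ be two distinct (n−1)-dimensional linear subspaces of ℝⁿ such that the orthogonal projection of μ onto S₁ is Gaussian and the orthogonal projection of μ onto S₂ is Gaussian. Then μ has finite exponential moments in every direction: for every s ∈ ℝⁿ, ∫_{ℝⁿ} e^{sᵀx} μ(dx) < ∞. Consequently the Laplace transform μ̂(z) = ∫ exp(z₁x₁ + ... + zₙxₙ) μ(dx) is well-defined for all z ∈ ℂⁿ and is an entire function of each complex variable z_j. -/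
open MeasureTheory ProbabilityTheory

/-! By convexity of `exp`, the functions `X` with `exp X` integrable form a convex set. Writing
`X + Y` as the midpoint of `2 • X` and `2 • Y` shows that the functions with finite exponential
moments form a linear space, whatever the dependence between them. Gaussian variables belong to it,
and two distinct hyperplanes span the whole space. -/

section Hyperplanes

variable {K V : Type*} [DivisionRing K] [AddCommGroup V] [Module K V] {S T : Submodule K V}

theorem isCoatom_of_finrank_add_one_eq (hS : Module.finrank K S + 1 = Module.finrank K V) :
    IsCoatom S := by
  rw [← isSimpleModule_iff_isCoatom, isSimpleModule_iff_finrank_eq_one]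
  have : Module.Finite K V := Module.finite_of_finrank_pos (by omega)
  have := S.finrank_quotient_add_finrank
  omega

theorem span_union_eq_top_of_finrank_add_one_eq
    (hS : Module.finrank K S + 1 = Module.finrank K V)
    (hT : Module.finrank K T + 1 = Module.finrank K V) (hne : S ≠ T) :
    Submodule.span K (S ∪ T : Set V) = ⊤ := by
  rw [Submodule.span_union, Submodule.span_eq, Submodule.span_eq]
  exact (isCoatom_of_finrank_add_one_eq hS).sup_eq_top_of_ne (isCoatom_of_finrank_add_one_eq hT) hne

end Hyperplanes

section FiniteExpMoments

variable {Ω : Type*} [MeasurableSpace Ω] {μ : Measure Ω}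

theorem convex_setOf_integrable_exp :
    Convex ℝ {X : Ω → ℝ | Integrable (fun ω => Real.exp (X ω)) μ} := by
  intro X hX Y hY a b ha hb hab
  have hXm : AEMeasurable X μ := Real.aemeasurable_of_aemeasurable_exp hX.aemeasurable
  have hYm : AEMeasurable Y μ := Real.aemeasurable_of_aemeasurable_exp hY.aemeasurable
  refine ((hX.const_mul a).add (hY.const_mul b)).mono'
    ((hXm.const_smul a).add (hYm.const_smul b)).exp.aestronglyMeasurable (.of_forall fun ω => ?_)
  rw [Real.norm_eq_abs, Real.abs_exp]
  exact convexOn_exp.2 (Set.mem_univ (X ω)) (Set.mem_univ (Y ω)) ha hb hab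

/-- The space of real functions all of whose exponential moments under `μ` are finite. It consists
of functions rather than of their almost everywhere classes, so that a linear family of random
variables maps into it. -/
def finiteExpMoments (μ : Measure Ω) [IsFiniteMeasure μ] : Submodule ℝ (Ω → ℝ) where
  carrier := {X | integrableExpSet X μ = Set.univ}
  zero_mem' := by simp [integrableExpSet]
  smul_mem' c X hX := by
    refine Set.eq_univ_of_forall fun t => ?_
    simpa [integrableExpSet, mul_assoc] using hX.ge (Set.mem_univ (t * c))
  add_mem' {X Y} hX hY := by
    refine Set.eq_univ_of_forall fun t => ?_
    have hmid := convex_setOf_integrable_exp (hX.ge (Set.mem_univ (2 * t)))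
      (hY.ge (Set.mem_univ (2 * t))) one_half_pos.le one_half_pos.le (add_halves 1)
    refine hmid.congr (.of_forall fun ω => congrArg Real.exp ?_)
    simp only [Pi.add_apply, Pi.smul_apply, smul_eq_mul]
    ring

theorem integrable_exp_of_mem_finiteExpMoments [IsFiniteMeasure μ] {X : Ω → ℝ}
    (hX : X ∈ finiteExpMoments μ) : Integrable (fun ω => Real.exp (X ω)) μ := by
  simpa [integrableExpSet] using hX.ge (Set.mem_univ 1)

theorem integrableExpSet_eq_univ_of_map_eq_gaussianReal {X : Ω → ℝ} {m : ℝ} {v : NNReal}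
    (hmap : μ.map X = gaussianReal m v) : integrableExpSet X μ = Set.univ := by
  have : NeZero (μ.map X) := hmap ▸ inferInstance
  refine Set.eq_univ_of_forall fun t => ?_
  have hexp : Integrable (fun x => Real.exp (t * x)) (μ.map X) :=
    hmap ▸ integrable_exp_mul_gaussianReal t
  exact hexp.comp_aemeasurable (aemeasurable_of_map_neZero this)

theorem stmt_17_general [IsFiniteMeasure μ] {V : Type*} [AddCommGroup V] [Module ℝ V]
    (X : V →ₗ[ℝ] Ω → ℝ) {G : Set V} (hspan : Submodule.span ℝ G = ⊤)
    (hG : ∀ a ∈ G, integrableExpSet (X a) μ = Set.univ) (s : V) :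
    Integrable (fun ω => Real.exp (X s ω)) μ := by
  have hle : Submodule.span ℝ G ≤ (finiteExpMoments μ).comap X := Submodule.span_le.2 hG
  exact integrable_exp_of_mem_finiteExpMoments (hle (hspan ▸ Submodule.mem_top))

end FiniteExpMoments

/-- If the orthogonal projections of a probability measure μ on ℝⁿ onto two distinct
(n−1)-dimensional subspaces are Gaussian (every linear functional coming from the subspace
is normally distributed, possibly degenerately), then μ has finite exponential moments in
every direction. -/
theorem stmt_17 (n : ℕ) (hn : 2 ≤ n) (μ : Measure (Fin n → ℝ)) [IsProbabilityMeasure μ]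
    (S₁ S₂ : Submodule ℝ (Fin n → ℝ))
    (hS₁ : Module.finrank ℝ S₁ = n - 1) (hS₂ : Module.finrank ℝ S₂ = n - 1)
    (hne : S₁ ≠ S₂)
    (hG₁ : ∀ a ∈ S₁, ∃ (m : ℝ) (v : NNReal),
      Measure.map (fun x => ∑ i, a i * x i) μ = gaussianReal m v)
    (hG₂ : ∀ a ∈ S₂, ∃ (m : ℝ) (v : NNReal),
      Measure.map (fun x => ∑ i, a i * x i) μ = gaussianReal m v) :
    ∀ s : Fin n → ℝ, Integrable (fun x => Real.exp (∑ i, s i * x i)) μ := by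
  have hspan := span_union_eq_top_of_finrank_add_one_eq (S := S₁) (T := S₂)
    (by rw [hS₁, Module.finrank_fin_fun]; omega) (by rw [hS₂, Module.finrank_fin_fun]; omega) hne
  refine stmt_17_general (.ltoFun ℝ _ ℝ ℝ ∘ₗ dotProductBilin ℝ ℝ) hspan fun a ha => ?_
  obtain ⟨m, v, hmap⟩ := ha.elim (hG₁ a) (hG₂ a)
  exact integrableExpSet_eq_univ_of_map_eq_gaussianReal hmap
end
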